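/- arXiv:1810.13275 — 2 statements merged into one kernel-verified Lean document; each statement's English description precedes it below -/
import Mathlib

section
/- For every α > 0, every seed tree S of size k ≥ 2, and every pair of decorated trees τ and σ: E[F_{τ,σ}(T_n^S)] = O( E[F_τ(T_n^S)] · E[F_σ(T_n^S)] ) as n → ∞. -/
/-!
The strategy is to compare the recursions satisfied by the three first moments. Let `τ` and `σ` be
placed side by side in their disjoint union `g`, on vertex sets `A` and `B`. Conditionally on the
current tree with `n` vertices, the expected one-step increment of the observable of any pattern,
multiplied by `D = (1 + α) n - 2`, is a sum of contributions of the vertices of the pattern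
(`sum_drift`):

* a vertex with decoration `l ≥ 1` contributes `l` times the observable plus `l (l - 1 + α)` times
  the observable in which `l` is lowered by one;
* an undecorated vertex with at least two neighbours contributes nothing, since it cannot be
  sent to the new leaf and its weight does not depend on degrees;
* an undecorated leaf may be sent to the new vertex, and contributes `1` times the observable plus
  observables of the pattern with this leaf removed. The latter are not given by an exact formula
  with positive coefficients, because neighbours of the image of the parent may be used by other
  vertices, but they are bounded above and below (`newPart_leaf_le`, `le_newPart_leaf`).

The contribution of `v ∈ A` thus has the same leading coefficient for the pattern `A` and for the
pattern `A ∪ B`, and the remainders involve smaller patterns. By induction on the number of vertices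
plus the total decoration, the remainder for `A ∪ B` is at most a constant times the remainder for
`A` times the mean for `B` (`MeanChain.vertex_bound`). The lower bound for `A` fails only when `A` is
an undecorated edge (or vertex); then the observable of `A` is a function of `n` alone and the pair
bound is immediate (`MeanChain.plain_bound`).

With these comparisons, if `p ≤ K a b` holds for the means `p, a, b` of `A ∪ B`, `A`, `B` at time
`m`, with `K` larger than all constants involved, then the increments satisfy
`D Δp ≤ K (D Δa · b + a · D Δb)`. As `Δa, Δb ≥ 0`, it follows that
`p + Δp ≤ K (a + Δa) (b + Δb)`. At time zero the tree is deterministic and the bound is trivial. The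
resulting estimate `MeanChain.pair_bound` holds at all times, not only eventually.

The recursions use injective homomorphisms rather than induced embeddings; the two notions agree for
a connected pattern in a tree (`adj_of_injective_hom`).
-/

open MeasureTheory Filter Asymptotics

noncomputable section

namespace AffinePA

instance (V : Type*) : MeasurableSpace (SimpleGraph V) := ⊤

/-- The degree of a vertex. -/
def degR {V : Type*} (G : SimpleGraph V) (v : V) : ℕ := Nat.card {w // G.Adj v w}

/-- The tree on `n+1` vertices obtained from `G` by attaching the new vertex to `u`. -/
def extendTree {n : ℕ} (G : SimpleGraph (Fin n)) (u : Fin n) : SimpleGraph (Fin (n + 1)) :=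
  SimpleGraph.fromRel fun a b =>
    (∃ a' b' : Fin n, a = Fin.castSucc a' ∧ b = Fin.castSucc b' ∧ G.Adj a' b') ∨
      (a = Fin.castSucc u ∧ b = Fin.last n)

/-- One step of the affine preferential attachment dynamics. -/
def stepMeasure (α : ℝ) {n : ℕ} (G : SimpleGraph (Fin n)) :
    Measure (SimpleGraph (Fin (n + 1))) :=
  ∑ u : Fin n,
    ENNReal.ofReal (((degR G u : ℝ) - 1 + α) / ((1 + α) * (n : ℝ) - 2)) •
      Measure.dirac (extendTree G u)

/-- The law of the α-PA tree with `m` added vertices, started from the seed `S`. -/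
def paLaw (α : ℝ) {k : ℕ} (S : SimpleGraph (Fin k)) :
    (m : ℕ) → Measure (SimpleGraph (Fin (k + m)))
  | 0 => Measure.dirac S
  | m + 1 => (paLaw α S m).bind (stepMeasure α)

/-- The weight `∏_u [deg_T(f u) - 1]_{ℓ u}` of a map `f`. -/
def embWeight {V W : Type*} [Fintype V] (T : SimpleGraph W) (ℓ : V → ℕ) (f : V → W) : ℝ :=
  ∏ u : V, ((degR T (f u) - 1).descFactorial (ℓ u) : ℝ)

/-- The observable `F_{(τ,ℓ)}(T)`. -/
def obsG {V W : Type*} [Fintype V] (τ : SimpleGraph V) (ℓ : V → ℕ) (T : SimpleGraph W) : ℝ :=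
  ∑ᶠ φ : τ ↪g T, embWeight T ℓ ⇑φ

/-- The weight `w(τ,ℓ)` of a decorated tree. -/
def weightG {V : Type*} [Fintype V] (τ : SimpleGraph V) (ℓ : V → ℕ) : ℕ :=
  if Fintype.card V ≤ 2 ∧ ∀ v, ℓ v = 0 then 1
  else (∑ v, ℓ v) + Nat.card {v // degR τ v = 1 ∧ ℓ v = 0}

/-- A decorated tree: a finite graph on `Fin n` with nonnegative integer decorations. -/
structure DecTree where
  n : ℕ
  tree : SimpleGraph (Fin n)
  dec : Fin n → ℕ

def DecTree.wt (τ : DecTree) : ℕ := weightG τ.tree τ.dec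

def DecTree.decSum (τ : DecTree) : ℕ := ∑ v, τ.dec v

def DecTree.obs (τ : DecTree) {W : Type*} (T : SimpleGraph W) : ℝ := obsG τ.tree τ.dec T

/-- The strict partial order `≺` on decorated trees. -/
def DecLt (σ τ : DecTree) : Prop :=
  (σ.wt < τ.wt ∧ σ.n ≤ τ.n) ∨ (σ.wt = τ.wt ∧ σ.n < τ.n) ∨
    (σ.wt = τ.wt ∧ σ.n = τ.n ∧ σ.decSum < τ.decSum)

open Classical in
/-- `F_{τ+τ}(T)`: sum over pairs of embeddings with overlapping images. -/
def obsOverlapG {V W : Type*} [Fintype V] (τ : SimpleGraph V) (ℓ : V → ℕ)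
    (T : SimpleGraph W) : ℝ :=
  ∑ᶠ (φ₁ : τ ↪g T) (φ₂ : τ ↪g T),
    if (Set.range ⇑φ₁ ∩ Set.range ⇑φ₂).Nonempty then
      embWeight T ℓ ⇑φ₁ * embWeight T ℓ ⇑φ₂
    else 0

open Classical in
/-- `F_{τ,σ}(T)`: sum over pairs of embeddings with disjoint images. -/
def obsDisjG {V₁ V₂ W : Type*} [Fintype V₁] [Fintype V₂] (τ : SimpleGraph V₁) (ℓτ : V₁ → ℕ)
    (σ : SimpleGraph V₂) (ℓσ : V₂ → ℕ) (T : SimpleGraph W) : ℝ :=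
  ∑ᶠ (φ₁ : τ ↪g T) (φ₂ : σ ↪g T),
    if Disjoint (Set.range ⇑φ₁) (Set.range ⇑φ₂) then
      embWeight T ℓτ ⇑φ₁ * embWeight T ℓσ ⇑φ₂
    else 0

/-- `f ≈ g` : same order of magnitude, eventually. -/
def asympEquiv (f g : ℕ → ℝ) : Prop :=
  ∃ C : ℝ, 0 < C ∧ ∀ᶠ n in atTop, f n ≤ C * g n ∧ g n ≤ C * f n

/-- Descending factorial `[x]_l` of a real number. -/
def descPoch (x : ℝ) (l : ℕ) : ℝ := ∏ i ∈ Finset.range l, (x - (i : ℝ))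

/-- Total variation distance between two measures. -/
def tvDist {X : Type*} [MeasurableSpace X] (μ ν : Measure X) : ℝ :=
  ⨆ s : {s : Set X // MeasurableSet s}, |(μ ↑s).toReal - (ν ↑s).toReal|

open Classical in
/-- The contribution to `F_τ` of embeddings whose image meets the seed. -/
def obsMeetSeed (k m : ℕ) {r : ℕ} (τ : SimpleGraph (Fin r)) (ℓ : Fin r → ℕ)
    (T : SimpleGraph (Fin (k + m))) : ℝ :=
  ∑ᶠ φ : τ ↪g T,
    if ∃ (x : Fin r) (y : Fin k), φ x = Fin.castAdd m y then embWeight T ℓ ⇑φ else 0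

/-- The contribution to `F_τ` of embeddings contained in the seed. -/
def obsInSeed (k m : ℕ) {r : ℕ} (τ : SimpleGraph (Fin r)) (ℓ : Fin r → ℕ)
    (S : SimpleGraph (Fin k)) (T : SimpleGraph (Fin (k + m))) : ℝ :=
  ∑ᶠ φ : τ ↪g S, embWeight T ℓ fun u => Fin.castAdd m (φ u)

/-- `D_{τ,d}(T)`: the number of perfect embeddings of `(τ,d)` in `T`. -/
def perfCount {V W : Type*} (τ : SimpleGraph V) (d : V → ℕ) (T : SimpleGraph W) : ℕ :=
  Nat.card {φ : τ ↪g T // ∀ u, degR T (φ u) = d u}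

/-- `τ` is `(T₁,T₂)`-blind. -/
def IsBlind {V W₁ W₂ : Type*} (τ : SimpleGraph V) (T₁ : SimpleGraph W₁)
    (T₂ : SimpleGraph W₂) : Prop :=
  ∀ d : V → ℕ, (∀ u, 1 ≤ d u) → perfCount τ d T₁ = perfCount τ d T₂

/-- `D_{σ,τ,d}(T)`: perfect embeddings of `(τ,d)` meeting the seed exactly in `φ(A)`. -/
def perfCountSeed (k m : ℕ) {r : ℕ} (τ : SimpleGraph (Fin r)) (A : Finset (Fin r))
    (d : Fin r → ℕ) (T : SimpleGraph (Fin (k + m))) : ℕ :=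
  Nat.card {φ : τ ↪g T //
    (∀ u, degR T (φ u) = d u) ∧ ∀ u : Fin r, (∃ y : Fin k, φ u = Fin.castAdd m y) ↔ u ∈ A}

/-- The σ-algebra generated by `T_0, …, T_m`. -/
def natFilt {Ω : Type*} [MeasurableSpace Ω] {k : ℕ}
    (T : (m : ℕ) → Ω → SimpleGraph (Fin (k + m))) (m : ℕ) : MeasurableSpace Ω :=
  ⨆ j ∈ Set.Iic m, MeasurableSpace.comap (T j) inferInstance

/-- `(T_m)` is an α-PA chain started from the seed `S`, on the probability space `(Ω,P)`. -/
structure IsPAChain (α : ℝ) {k : ℕ} (S : SimpleGraph (Fin k)) {Ω : Type*} [MeasurableSpace Ω]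
    (P : Measure Ω) (T : (m : ℕ) → Ω → SimpleGraph (Fin (k + m))) : Prop where
  isProb : IsProbabilityMeasure P
  meas : ∀ m, Measurable (T m)
  init : ∀ᵐ ω ∂P, T 0 ω = S
  step : ∀ (m : ℕ) (f : SimpleGraph (Fin (k + (m + 1))) → ℝ),
    P[(fun ω => f (T (m + 1) ω))|natFilt T m] =ᵐ[P]
      fun ω => ∫ G, f G ∂stepMeasure α (T m ω)

/-- The natural filtration of the chain. -/
def natFiltration {Ω : Type*} [mΩ : MeasurableSpace Ω] {k : ℕ}
    (T : (m : ℕ) → Ω → SimpleGraph (Fin (k + m))) (hT : ∀ m, Measurable (T m)) :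
    Filtration ℕ mΩ where
  seq := natFilt T
  mono' _ _ hij := biSup_mono fun _ hx => le_trans hx hij
  le' _ := iSup_le fun l => iSup_le fun _ => (hT l).comap_le

/-- Isomorphism of simple graphs as a setoid. -/
def isoSetoid (n : ℕ) : Setoid (SimpleGraph (Fin n)) where
  r G H := Nonempty (G ≃g H)
  iseqv := ⟨fun G => ⟨RelIso.refl G.Adj⟩, fun ⟨e⟩ => ⟨e.symm⟩, fun ⟨e⟩ ⟨f⟩ => ⟨e.trans f⟩⟩

/-- Isomorphism classes of graphs on `n` vertices. -/
def IsoClass (n : ℕ) : Type := Quotient (isoSetoid n)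

instance (n : ℕ) : MeasurableSpace (IsoClass n) := ⊤

/-- The law of the isomorphism class of the α-PA tree with `n` vertices grown from `S`. -/
def isoClassLaw (α : ℝ) {k : ℕ} (S : SimpleGraph (Fin k)) (n : ℕ) : Measure (IsoClass n) :=
  if h : k ≤ n then
    (paLaw α S (n - k)).map fun G =>
      Quotient.mk (isoSetoid n) (G.map (finCongr (Nat.add_sub_cancel' h)).toEmbedding)
  else 0

set_option linter.unusedSectionVars false

section Combinatorics

open Finset

/-! ### Observables as weighted sums over injective homomorphisms -/

/-- A host graph in the form used for counting: `N` vertices labelled `0, …, N - 1`, an adjacency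
relation on `ℕ`, and `x u`, to be read as the degree of `u` minus one. Labels live in `ℕ` so that
one type carries the trees of all sizes; `Host.Good` records the properties of a genuine tree that
the argument needs. -/
structure Host where
  N : ℕ
  adj : ℕ → ℕ → Prop
  x : ℕ → ℕ

/-- The host obtained by attaching a new vertex, labelled `T.N`, to the vertex `u`. -/
def Host.grow (T : Host) (u : ℕ) : Host where
  N := T.N + 1
  adj a b := T.adj a b ∨ (a = u ∧ b = T.N) ∨ (a = T.N ∧ b = u)
  x := Function.update (Function.update T.x u (T.x u + 1)) T.N 0

open Classical in
/-- The adjacency relation is a simple graph on `0, …, N - 1`, the vertex `u` has `x u + 1`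
neighbours, and the degrees sum to `2 (N - 1)` (written as `∑ x = N - 2`), as they do in a tree on
at least two vertices. Acyclicity itself is not needed for the moment recursions. -/
structure Host.Good (T : Host) : Prop where
  symm : ∀ a b, T.adj a b → T.adj b a
  irrefl : ∀ a, ¬ T.adj a a
  lt : ∀ a b, T.adj a b → b < T.N
  card : ∀ u < T.N, #{w ∈ range T.N | T.adj u w} = T.x u + 1
  total : ∑ u ∈ range T.N, T.x u + 2 = T.N

variable {V : Type} [Fintype V] [DecidableEq V]

/-- The maps from `A` to `{0, …, N - 1}`, encoded as maps on all of `V` vanishing outside `A`. -/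
def dom (A : Finset V) (N : ℕ) : Finset (V → ℕ) :=
  Fintype.piFinset fun v => if v ∈ A then range N else {0}

/-- The map `φ` restricts to an injective homomorphism from the graph induced by `g` on `A`. In a
tree host, and with `A` inducing a tree, these are exactly the induced embeddings. -/
def Valid (g : SimpleGraph V) (A : Finset V) (adj : ℕ → ℕ → Prop) (φ : V → ℕ) : Prop :=
  Set.InjOn φ A ∧ ∀ a ∈ A, ∀ b ∈ A, g.Adj a b → adj (φ a) (φ b)

/-- The weight `∏_{v ∈ A} [x (φ v)]_{ℓ v}` of a map. -/
def wprod (ℓ : V → ℕ) (A : Finset V) (x : ℕ → ℕ) (φ : V → ℕ) : ℝ :=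
  ∏ v ∈ A, ((x (φ v)).descFactorial (ℓ v) : ℝ)

open Classical in
/-- The observable of the pattern induced by `g` on `A`, decorated by `ℓ`: the total weight of its
injective homomorphisms into `T`. Patterns are vertex sets of one fixed ambient graph `g`, so that
for disjoint `A` and `B` without edges between them, `obs g (A ∪ B) ℓ` is the observable of pairs
with disjoint images. -/
def obs (g : SimpleGraph V) (A : Finset V) (ℓ : V → ℕ) (T : Host) : ℝ :=
  ∑ φ ∈ dom A T.N, if Valid g A T.adj φ then wprod ℓ A T.x φ else 0

lemma mem_dom {A : Finset V} {N : ℕ} {φ : V → ℕ} :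
    φ ∈ dom A N ↔ (∀ v ∈ A, φ v < N) ∧ ∀ v ∉ A, φ v = 0 := by
  simp only [dom, Fintype.mem_piFinset]
  constructor
  · intro h
    refine ⟨fun v hv => ?_, fun v hv => ?_⟩
    · simpa [hv] using h v
    · simpa [hv] using h v
  · rintro ⟨h1, h2⟩ v
    by_cases hv : v ∈ A
    · simpa [hv] using h1 v hv
    · simpa [hv] using h2 v hv

lemma wprod_nonneg (ℓ : V → ℕ) (A : Finset V) (x : ℕ → ℕ) (φ : V → ℕ) : 0 ≤ wprod ℓ A x φ :=
  prod_nonneg fun _ _ => by positivity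

lemma obs_nonneg (g : SimpleGraph V) (A : Finset V) (ℓ : V → ℕ) (T : Host) :
    0 ≤ obs g A ℓ T :=
  sum_nonneg fun φ _ => by split_ifs <;> simp [wprod_nonneg]

lemma obs_congr (g : SimpleGraph V) (A : Finset V) {ℓ ℓ' : V → ℕ} (h : ∀ v ∈ A, ℓ v = ℓ' v)
    (T : Host) : obs g A ℓ T = obs g A ℓ' T := by
  unfold obs wprod
  refine sum_congr rfl fun φ _ => ?_
  rw [prod_congr rfl fun v hv => by rw [h v hv]]

/-- Summing over maps on `A` amounts to summing over maps on `A \ {v}` and the value at `v`. -/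
lemma sum_dom_erase {A : Finset V} {v : V} (hv : v ∈ A) (N : ℕ) (f : (V → ℕ) → ℝ) :
    ∑ φ ∈ dom A N, f φ =
      ∑ φ ∈ dom (A.erase v) N, ∑ w ∈ range N, f (Function.update φ v w) := by
  rw [← sum_product']
  refine sum_nbij' (fun φ => (Function.update φ v 0, φ v)) (fun q => Function.update q.1 v q.2)
    ?_ ?_ ?_ ?_ ?_
  · intro φ hφ
    rw [mem_dom] at hφ
    simp only [mem_product, mem_dom, mem_range]
    refine ⟨⟨fun a ha => ?_, fun a ha => ?_⟩, hφ.1 v hv⟩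
    · rw [Function.update_of_ne (ne_of_mem_erase ha)]; exact hφ.1 a (mem_of_mem_erase ha)
    · by_cases hav : a = v
      · simp [hav]
      · rw [Function.update_of_ne hav]; exact hφ.2 a (by simpa [hav] using ha)
  · rintro ⟨φ, w⟩ hq
    simp only [mem_product, mem_dom, mem_range] at hq ⊢
    refine ⟨fun a ha => ?_, fun a ha => ?_⟩
    · by_cases hav : a = v
      · simp [hav, hq.2]
      · rw [Function.update_of_ne hav]; exact hq.1.1 a (by simp [hav, ha])
    · have hav : a ≠ v := by rintro rfl; exact ha hv
      rw [Function.update_of_ne hav]; exact hq.1.2 a (by simp [ha])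
  · intro φ _; simp
  · rintro ⟨φ, w⟩ hq
    simp only [mem_product, mem_dom, mem_range] at hq
    have : φ v = 0 := hq.1.2 v (by simp)
    simp [← this]
  · intro φ _; simp

/-- A map from `A` to `{0, …, N}` that is injective takes the value `N` either nowhere or at exactly
one vertex of `A`; a sum over such maps splits accordingly. -/
lemma sum_dom_succ (A : Finset V) (N : ℕ) (f : (V → ℕ) → ℝ)
    (hf : ∀ φ, ¬ Set.InjOn φ A → f φ = 0) :
    ∑ φ ∈ dom A (N + 1), f φ = ∑ φ ∈ dom A N, f φ +
      ∑ v ∈ A, ∑ φ ∈ dom (A.erase v) N, f (Function.update φ v N) := by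
  have hsub : dom A N ⊆ dom A (N + 1) := by
    intro φ; simp only [mem_dom]; exact fun h => ⟨fun v hv => (h.1 v hv).trans (by simp), h.2⟩
  have h1 : ∀ φ ∈ dom A (N + 1), f φ = (if φ ∈ dom A N then f φ else 0) +
      ∑ v ∈ A, if φ v = N then f φ else 0 := by
    intro φ hφ
    by_cases hi : Set.InjOn φ A
    swap
    · simp [hf φ hi]
    by_cases hN : φ ∈ dom A N
    · rw [if_pos hN, sum_eq_zero, add_zero]
      intro v hv
      rw [if_neg ((mem_dom.1 hN).1 v hv).ne]
    · rw [if_neg hN, zero_add]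
      have : ∃ v ∈ A, φ v = N := by
        by_contra! hcon
        refine hN (mem_dom.2 ⟨fun v hv => ?_, (mem_dom.1 hφ).2⟩)
        have := (mem_dom.1 hφ).1 v hv
        have := hcon v hv
        omega
      obtain ⟨v, hv, hvN⟩ := this
      rw [sum_eq_single_of_mem v hv, if_pos hvN]
      intro w hw hwv
      rw [if_neg]
      intro hwN
      exact hwv (hi hw hv (hwN.trans hvN.symm))
  rw [sum_congr rfl h1, sum_add_distrib, sum_ite_mem, inter_eq_right.2 hsub, sum_comm]
  congr 1
  refine sum_congr rfl fun v hv => ?_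
  rw [sum_dom_erase hv]
  simp only [Function.update_self, sum_ite_eq', mem_range, Nat.lt_succ_self, if_true]
  symm
  refine sum_subset ?_ ?_
  · intro φ; simp only [mem_dom]; exact fun h => ⟨fun v hv => (h.1 v hv).trans (by simp), h.2⟩
  · intro φ h1 h2
    apply hf
    intro hi
    apply h2
    rw [mem_dom] at h1 ⊢
    refine ⟨fun a ha => ?_, h1.2⟩
    have hav := ne_of_mem_erase ha
    have h3 := h1.1 a ha
    rcases Nat.lt_succ_iff_lt_or_eq.1 h3 with h | h
    · exact h
    · exfalso
      apply hav
      apply hi (mem_of_mem_erase ha) hv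
      simp [Function.update_of_ne hav, h]

/-! ### The one-step drift of an observable -/

lemma cast_descFactorial_succ (x k : ℕ) :
    (x.descFactorial (k + 1) : ℝ) = ((x : ℝ) - k) * x.descFactorial k := by
  rw [Nat.descFactorial_succ, Nat.cast_mul]
  rcases le_or_gt k x with h | h
  · rw [Nat.cast_sub h]
  · simp [Nat.descFactorial_eq_zero_iff_lt.2 h]

/-- The effect on `[x]_l` of raising `x` by one, weighted by the attachment weight `x + α`. -/
lemma descFactorial_drift (α : ℝ) (x l : ℕ) :
    ((x : ℝ) + α) * ((x + 1).descFactorial l - x.descFactorial l) =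
      l * (x.descFactorial l + ((l : ℝ) - 1 + α) * x.descFactorial (l - 1)) := by
  cases l with
  | zero => simp
  | succ k =>
    rw [Nat.succ_descFactorial_succ, cast_descFactorial_succ]
    push_cast
    simp
    ring

lemma wprod_erase {A : Finset V} {v : V} (hv : v ∈ A) (ℓ : V → ℕ) (x : ℕ → ℕ) (φ : V → ℕ) :
    wprod ℓ A x φ = (x (φ v)).descFactorial (ℓ v) * wprod ℓ (A.erase v) x φ :=
  (mul_prod_erase A _ hv).symm

lemma wprod_congr {A : Finset V} {ℓ ℓ' : V → ℕ} {x x' : ℕ → ℕ} {φ φ' : V → ℕ}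
    (h : ∀ v ∈ A, ℓ v = ℓ' v) (h' : ∀ v ∈ A, x (φ v) = x' (φ' v)) :
    wprod ℓ A x φ = wprod ℓ' A x' φ' :=
  prod_congr rfl fun v hv => by rw [h v hv, h' v hv]

lemma grow_x_self (T : Host) {u : ℕ} (hu : u < T.N) : (T.grow u).x u = T.x u + 1 := by
  simp [Host.grow, Function.update_of_ne hu.ne]

lemma grow_x_of_ne (T : Host) {u w : ℕ} (hw : w < T.N) (h : w ≠ u) :
    (T.grow u).x w = T.x w := by
  simp [Host.grow, Function.update_of_ne hw.ne, Function.update_of_ne h]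

lemma grow_x_new (T : Host) (u : ℕ) : (T.grow u).x T.N = 0 := by
  simp [Host.grow]

lemma valid_grow (g : SimpleGraph V) {A : Finset V} (T : Host) (u : ℕ) {φ : V → ℕ}
    (hφ : φ ∈ dom A T.N) : Valid g A (T.grow u).adj φ ↔ Valid g A T.adj φ := by
  unfold Valid
  refine and_congr_right fun _ => forall₂_congr fun a ha => forall₂_congr fun b hb => ?_
  have h1 := ((mem_dom.1 hφ).1 a ha).ne
  have h2 := ((mem_dom.1 hφ).1 b hb).ne
  simp [Host.grow, h1, h2]

/-- Condition for a map to be valid in terms of its restriction to `A \ {v}` and its value `w` at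
`v`. -/
lemma valid_update (g : SimpleGraph V) {A : Finset V} {v : V} (hv : v ∈ A)
    {adj : ℕ → ℕ → Prop} (hs : ∀ a b, adj a b → adj b a) (φ : V → ℕ) (w : ℕ) :
    Valid g A adj (Function.update φ v w) ↔
      Valid g (A.erase v) adj φ ∧ (∀ q ∈ A.erase v, φ q ≠ w) ∧
        ∀ q ∈ A, g.Adj v q → adj (φ q) w := by
  constructor
  · rintro ⟨h1, h2⟩
    refine ⟨⟨fun a ha b hb hab => ?_, fun a ha b hb hab => ?_⟩, fun q hq hqw => ?_,
      fun q hq hvq => ?_⟩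
    · have ha' := mem_erase.1 ha
      have hb' := mem_erase.1 hb
      refine h1 ha'.2 hb'.2 ?_
      rwa [Function.update_of_ne ha'.1, Function.update_of_ne hb'.1]
    · have ha' := mem_erase.1 ha
      have hb' := mem_erase.1 hb
      have := h2 a ha'.2 b hb'.2 hab
      rwa [Function.update_of_ne ha'.1, Function.update_of_ne hb'.1] at this
    · have hq' := mem_erase.1 hq
      refine hq'.1 (h1 hq'.2 hv ?_)
      rw [Function.update_of_ne hq'.1, Function.update_self, hqw]
    · have := h2 q hq v hv hvq.symm
      rwa [Function.update_of_ne hvq.ne', Function.update_self] at this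
  · rintro ⟨⟨h1, h2⟩, h3, h4⟩
    refine ⟨fun a ha b hb hab => ?_, fun a ha b hb hab => ?_⟩
    · by_cases hav : a = v <;> by_cases hbv : b = v
      · rw [hav, hbv]
      · subst hav
        rw [Function.update_self, Function.update_of_ne hbv] at hab
        exact absurd hab.symm (h3 b (mem_erase.2 ⟨hbv, hb⟩))
      · subst hbv
        rw [Function.update_self, Function.update_of_ne hav] at hab
        exact absurd hab (h3 a (mem_erase.2 ⟨hav, ha⟩))
      · rw [Function.update_of_ne hav, Function.update_of_ne hbv] at hab
        exact h1 (mem_erase.2 ⟨hav, ha⟩) (mem_erase.2 ⟨hbv, hb⟩) hab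
    · by_cases hav : a = v <;> by_cases hbv : b = v
      · subst hav; subst hbv; exact absurd hab (g.loopless.irrefl _)
      · subst hav
        rw [Function.update_self, Function.update_of_ne hbv]
        exact hs _ _ (h4 b hb hab)
      · subst hbv
        rw [Function.update_self, Function.update_of_ne hav]
        exact h4 a ha hab.symm
      · rw [Function.update_of_ne hav, Function.update_of_ne hbv]
        exact h2 a (mem_erase.2 ⟨hav, ha⟩) b (mem_erase.2 ⟨hbv, hb⟩) hab

/-- For a fixed map `φ` into the old vertices, only attachments to image vertices change the weight,
and each of them changes a single factor. -/
lemma sum_wprod_grow (α : ℝ) (A : Finset V) (ℓ : V → ℕ) (T : Host) {φ : V → ℕ}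
    (hφ : φ ∈ dom A T.N) (hi : Set.InjOn φ A) :
    ∑ u ∈ range T.N, ((T.x u : ℝ) + α) * (wprod ℓ A (T.grow u).x φ - wprod ℓ A T.x φ) =
      ∑ v ∈ A, (ℓ v : ℝ) * (wprod ℓ A T.x φ +
        ((ℓ v : ℝ) - 1 + α) * wprod (Function.update ℓ v (ℓ v - 1)) A T.x φ) := by
  have hlt := (mem_dom.1 hφ).1
  have himg : A.image φ ⊆ range T.N := by
    intro u hu
    obtain ⟨v, hv, rfl⟩ := mem_image.1 hu
    exact mem_range.2 (hlt v hv)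
  rw [← sum_subset himg, sum_image (by exact hi)]
  · refine sum_congr rfl fun v hv => ?_
    have e1 : wprod ℓ (A.erase v) (T.grow (φ v)).x φ = wprod ℓ (A.erase v) T.x φ := by
      refine wprod_congr (fun _ _ => rfl) fun w hw => ?_
      have hw' := mem_erase.1 hw
      exact grow_x_of_ne T (hlt w hw'.2) fun h => hw'.1 (hi hw'.2 hv h)
    have e2 : wprod (Function.update ℓ v (ℓ v - 1)) (A.erase v) T.x φ =
        wprod ℓ (A.erase v) T.x φ :=
      wprod_congr (fun w hw => Function.update_of_ne (mem_erase.1 hw).1 _ _) fun _ _ => rfl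
    rw [wprod_erase hv, wprod_erase hv ℓ T.x, wprod_erase hv _ T.x, e1, e2,
      grow_x_self T (hlt v hv), Function.update_self]
    linear_combination wprod ℓ (A.erase v) T.x φ * descFactorial_drift α (T.x (φ v)) (ℓ v)
  · intro u hu hu'
    have : wprod ℓ A (T.grow u).x φ = wprod ℓ A T.x φ := by
      refine wprod_congr (fun _ _ => rfl) fun w hw => ?_
      exact grow_x_of_ne T (hlt w hw) fun h => hu' (mem_image.2 ⟨w, hw, h⟩)
    rw [this, sub_self, mul_zero]

open Classical in
/-- The attachment-weighted contribution of the maps sending `v` to the new vertex. -/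
def newPart (g : SimpleGraph V) (α : ℝ) (A : Finset V) (ℓ : V → ℕ) (v : V) (T : Host) : ℝ :=
  ∑ u ∈ range T.N, ((T.x u : ℝ) + α) * ∑ φ ∈ dom (A.erase v) T.N,
    if Valid g A (T.grow u).adj (Function.update φ v T.N) then
      wprod ℓ A (T.grow u).x (Function.update φ v T.N) else 0

/-- The part of the one-step drift of `obs g A ℓ` due to the vertex `v`: the degree of the image of
`v` grows, or `v` sits at the new vertex. For `ℓ v = 0` the truncated `ℓ v - 1` is harmless, since
the first term carries the factor `ℓ v`. -/
def drift (g : SimpleGraph V) (α : ℝ) (A : Finset V) (ℓ : V → ℕ) (v : V) (T : Host) : ℝ :=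
  (ℓ v : ℝ) * (obs g A ℓ T +
    ((ℓ v : ℝ) - 1 + α) * obs g A (Function.update ℓ v (ℓ v - 1)) T) + newPart g α A ℓ v T

/-- The one-step drift of an observable, with unnormalised attachment weights, is the sum of the
drifts at its vertices. -/
lemma sum_drift (g : SimpleGraph V) (α : ℝ) (A : Finset V) (ℓ : V → ℕ) (T : Host) :
    ∑ u ∈ range T.N, ((T.x u : ℝ) + α) * (obs g A ℓ (T.grow u) - obs g A ℓ T) =
      ∑ v ∈ A, drift g α A ℓ v T := by
  classical
  have h1 : ∀ u, obs g A ℓ (T.grow u) =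
      (∑ φ ∈ dom A T.N, if Valid g A T.adj φ then wprod ℓ A (T.grow u).x φ else 0) +
      ∑ v ∈ A, ∑ φ ∈ dom (A.erase v) T.N,
        if Valid g A (T.grow u).adj (Function.update φ v T.N) then
          wprod ℓ A (T.grow u).x (Function.update φ v T.N) else 0 := by
    intro u
    unfold obs
    rw [show (T.grow u).N = T.N + 1 from rfl, sum_dom_succ]
    · congr 1
      exact sum_congr rfl fun φ hφ => by rw [valid_grow g T u hφ]
    · intro φ hφ
      exact if_neg fun h => hφ h.1
  have h2 : ∀ u, ((T.x u : ℝ) + α) * (obs g A ℓ (T.grow u) - obs g A ℓ T) =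
      (∑ φ ∈ dom A T.N, if Valid g A T.adj φ then
        ((T.x u : ℝ) + α) * (wprod ℓ A (T.grow u).x φ - wprod ℓ A T.x φ) else 0) +
      ∑ v ∈ A, ((T.x u : ℝ) + α) * ∑ φ ∈ dom (A.erase v) T.N,
        if Valid g A (T.grow u).adj (Function.update φ v T.N) then
          wprod ℓ A (T.grow u).x (Function.update φ v T.N) else 0 := by
    intro u
    rw [h1, ← mul_sum, add_sub_right_comm, mul_add]
    congr 1
    unfold obs
    rw [← sum_sub_distrib, mul_sum]
    refine sum_congr rfl fun φ _ => ?_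
    split_ifs <;> simp
  simp_rw [h2]
  rw [sum_add_distrib, sum_comm (s := range T.N) (t := A), sum_comm (s := range T.N)]
  unfold drift
  rw [sum_add_distrib]
  congr 1
  have h3 : ∀ φ ∈ dom A T.N, (∑ u ∈ range T.N, if Valid g A T.adj φ then
        ((T.x u : ℝ) + α) * (wprod ℓ A (T.grow u).x φ - wprod ℓ A T.x φ) else 0) =
      ∑ v ∈ A, if Valid g A T.adj φ then (ℓ v : ℝ) * (wprod ℓ A T.x φ +
        ((ℓ v : ℝ) - 1 + α) * wprod (Function.update ℓ v (ℓ v - 1)) A T.x φ) else 0 := by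
    intro φ hφ
    by_cases h : Valid g A T.adj φ
    · simp only [h, if_true]
      exact sum_wprod_grow α A ℓ T hφ h.1
    · simp [h]
  rw [sum_congr rfl h3, sum_comm]
  refine sum_congr rfl fun v _ => ?_
  unfold obs
  rw [mul_sum, ← sum_add_distrib, mul_sum]
  refine sum_congr rfl fun φ _ => ?_
  split_ifs <;> simp

/-! ### The drift at an undecorated leaf -/

lemma valid_grow_new (g : SimpleGraph V) {A : Finset V} {v : V} (hv : v ∈ A) {T : Host}
    (hT : T.Good) (u : ℕ) {φ : V → ℕ} (hφ : φ ∈ dom (A.erase v) T.N) :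
    Valid g A (T.grow u).adj (Function.update φ v T.N) ↔
      Valid g (A.erase v) T.adj φ ∧ ∀ q ∈ A, g.Adj v q → φ q = u := by
  have hlt := (mem_dom.1 hφ).1
  rw [valid_update g hv, valid_grow g T u hφ]
  · refine and_congr_right fun _ => ?_
    constructor
    · rintro ⟨-, h⟩ q hq hvq
      have hq' := hlt q (mem_erase.2 ⟨hvq.ne', hq⟩)
      rcases h q hq hvq with h | h | h
      · exact absurd (hT.lt _ _ h) (lt_irrefl _)
      · exact h.1
      · exact absurd h.1 hq'.ne
    · intro h
      exact ⟨fun q hq => (hlt q hq).ne, fun q hq hvq => Or.inr (Or.inl ⟨h q hq hvq, rfl⟩)⟩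
  · rintro a b (h | h | h)
    · exact Or.inl (hT.symm _ _ h)
    · exact Or.inr (Or.inr ⟨h.2, h.1⟩)
    · exact Or.inr (Or.inl ⟨h.2, h.1⟩)

/-- A decorated vertex cannot sit at the new vertex, whose degree is `1`. -/
lemma newPart_of_pos (g : SimpleGraph V) (α : ℝ) {A : Finset V} {ℓ : V → ℕ} {v : V}
    (hv : v ∈ A) (h : 1 ≤ ℓ v) (T : Host) : newPart g α A ℓ v T = 0 := by
  unfold newPart
  refine sum_eq_zero fun u _ => ?_
  rw [sum_eq_zero, mul_zero]
  intro φ _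
  split_ifs with h'
  · rw [wprod_erase hv, Function.update_self, grow_x_new]
    obtain ⟨k, hk⟩ := Nat.exists_eq_add_of_le' h
    simp [hk]
  · rfl

/-- A vertex with two neighbours in the pattern cannot sit at the new vertex. -/
lemma newPart_of_two (g : SimpleGraph V) (α : ℝ) {A : Finset V} {ℓ : V → ℕ} {v p q : V}
    (hv : v ∈ A) (hp : p ∈ A) (hq : q ∈ A) (hpq : p ≠ q) (hvp : g.Adj v p) (hvq : g.Adj v q)
    {T : Host} (hT : T.Good) : newPart g α A ℓ v T = 0 := by
  unfold newPart
  refine sum_eq_zero fun u _ => ?_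
  rw [sum_eq_zero, mul_zero]
  intro φ hφ
  rw [if_neg]
  rw [valid_grow_new g hv hT u hφ]
  rintro ⟨h1, h2⟩
  exact hpq (h1.1 (mem_erase.2 ⟨hvp.ne', hp⟩) (mem_erase.2 ⟨hvq.ne', hq⟩)
    ((h2 p hp hvp).trans (h2 q hq hvq).symm))

open Classical in
/-- The observable of `A` with the degree of the image of `p` as an extra weight. -/
def parentSum (g : SimpleGraph V) (A : Finset V) (ℓ : V → ℕ) (p : V) (T : Host) : ℝ :=
  ∑ φ ∈ dom A T.N, if Valid g A T.adj φ then ((T.x (φ p) : ℝ) + 1) * wprod ℓ A T.x φ else 0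

/-- The contribution of an undecorated leaf `v` at the new vertex, in terms of the pattern with `v`
removed. The weight `(x + α) [x + 1]_l` at the image of the parent `p` is expanded with
`descFactorial_drift`. -/
lemma newPart_leaf (g : SimpleGraph V) (α : ℝ) {A : Finset V} {ℓ : V → ℕ} {v p : V}
    (hv : v ∈ A) (hp : p ∈ A) (hvp : g.Adj v p) (huniq : ∀ q ∈ A, g.Adj v q → q = p)
    (hℓ : ℓ v = 0) {T : Host} (hT : T.Good) :
    newPart g α A ℓ v T = parentSum g (A.erase v) ℓ p T +
      (α + ℓ p - 1) * obs g (A.erase v) ℓ T +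
      ℓ p * ((ℓ p : ℝ) - 1 + α) * obs g (A.erase v) (Function.update ℓ p (ℓ p - 1)) T := by
  classical
  have hp' : p ∈ A.erase v := mem_erase.2 ⟨hvp.ne', hp⟩
  unfold newPart parentSum obs
  simp_rw [mul_sum]
  rw [sum_comm, ← sum_add_distrib, ← sum_add_distrib]
  refine sum_congr rfl fun φ hφ => ?_
  have hlt := (mem_dom.1 hφ).1
  have hcond : ∀ u, Valid g A (T.grow u).adj (Function.update φ v T.N) ↔
      Valid g (A.erase v) T.adj φ ∧ φ p = u := by
    intro u
    rw [valid_grow_new g hv hT u hφ]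
    refine and_congr_right fun _ => ⟨fun h => h p hp hvp, fun h q hq hvq => ?_⟩
    rw [huniq q hq hvq, h]
  simp_rw [hcond]
  by_cases hval : Valid g (A.erase v) T.adj φ
  swap
  · simp [hval]
  simp only [hval, true_and, if_true]
  rw [sum_eq_single_of_mem (φ p) (mem_range.2 (hlt p hp'))]
  swap
  · intro u _ hu
    rw [if_neg hu.symm, mul_zero]
  have e1 : wprod ℓ A (T.grow (φ p)).x (Function.update φ v T.N) =
      ((T.x (φ p) + 1).descFactorial (ℓ p) : ℝ) * wprod ℓ ((A.erase v).erase p) T.x φ := by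
    rw [wprod_erase hv, hℓ, Nat.descFactorial_zero, Nat.cast_one, one_mul, wprod_erase hp',
      Function.update_of_ne hvp.ne', grow_x_self T (hlt p hp')]
    congr 1
    refine wprod_congr (fun _ _ => rfl) fun w hw => ?_
    have hw1 := mem_erase.1 hw
    have hw2 := mem_erase.1 hw1.2
    rw [Function.update_of_ne hw2.1]
    exact grow_x_of_ne T (hlt w hw1.2) fun h => hw1.1 (hval.1 hw1.2 hp' h)
  have e2 : wprod (Function.update ℓ p (ℓ p - 1)) ((A.erase v).erase p) T.x φ =
      wprod ℓ ((A.erase v).erase p) T.x φ :=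
    wprod_congr (fun w hw => Function.update_of_ne (mem_erase.1 hw).1 _ _) fun _ _ => rfl
  rw [if_pos rfl, e1, wprod_erase hp' ℓ T.x, wprod_erase hp' _ T.x, e2, Function.update_self]
  linear_combination wprod ℓ ((A.erase v).erase p) T.x φ *
    descFactorial_drift α (T.x (φ p)) (ℓ p)

open Classical in
/-- An undecorated leaf may be placed at any neighbour of the image of its parent that is not
already used. -/
lemma obs_leaf (g : SimpleGraph V) {A : Finset V} {ℓ : V → ℕ} {v p : V}
    (hv : v ∈ A) (hp : p ∈ A) (hvp : g.Adj v p) (huniq : ∀ q ∈ A, g.Adj v q → q = p)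
    (hℓ : ℓ v = 0) {T : Host} (hT : T.Good) :
    obs g A ℓ T = ∑ φ ∈ dom (A.erase v) T.N, if Valid g (A.erase v) T.adj φ then
      (#{w ∈ range T.N | T.adj (φ p) w ∧ ∀ q ∈ A.erase v, φ q ≠ w} : ℝ) *
        wprod ℓ (A.erase v) T.x φ else 0 := by
  unfold obs
  rw [sum_dom_erase hv]
  refine sum_congr rfl fun φ hφ => ?_
  have hcond : ∀ w, Valid g A T.adj (Function.update φ v w) ↔
      Valid g (A.erase v) T.adj φ ∧ (T.adj (φ p) w ∧ ∀ q ∈ A.erase v, φ q ≠ w) := by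
    intro w
    rw [valid_update g hv hT.symm, and_comm (a := T.adj _ _)]
    refine and_congr_right fun _ => and_congr_right fun _ =>
      ⟨fun h => h p hp hvp, fun h q hq hvq => ?_⟩
    rwa [huniq q hq hvq]
  simp_rw [hcond]
  by_cases hval : Valid g (A.erase v) T.adj φ
  swap
  · simp [hval]
  simp only [hval, true_and, if_true]
  rw [← sum_filter, card_eq_sum_ones, Nat.cast_sum, sum_mul]
  refine sum_congr rfl fun w _ => ?_
  rw [wprod_erase hv, hℓ]
  simp only [Nat.descFactorial_zero, Nat.cast_one]
  rw [one_mul]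
  rw [one_mul]
  refine wprod_congr (fun _ _ => rfl) fun a ha => ?_
  rw [Function.update_of_ne (mem_erase.1 ha).1]

/-- At most `#A` neighbours of the image of the parent are used by the rest of the pattern. -/
lemma parentSum_le (g : SimpleGraph V) {A : Finset V} {ℓ : V → ℕ} {v p : V}
    (hv : v ∈ A) (hp : p ∈ A) (hvp : g.Adj v p) (huniq : ∀ q ∈ A, g.Adj v q → q = p)
    (hℓ : ℓ v = 0) {T : Host} (hT : T.Good) :
    parentSum g (A.erase v) ℓ p T ≤ obs g A ℓ T + #A * obs g (A.erase v) ℓ T := by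
  classical
  have hp' : p ∈ A.erase v := mem_erase.2 ⟨hvp.ne', hp⟩
  rw [obs_leaf g hv hp hvp huniq hℓ hT]
  unfold parentSum obs
  rw [mul_sum, ← sum_add_distrib]
  refine sum_le_sum fun φ hφ => ?_
  split_ifs with h
  swap
  · simp
  rw [← add_mul]
  refine mul_le_mul_of_nonneg_right ?_ (wprod_nonneg _ _ _ _)
  have h1 := hT.card (φ p) ((mem_dom.1 hφ).1 p hp')
  have h2 : filter (fun w => T.adj (φ p) w) (range T.N) ⊆
      {w ∈ range T.N | T.adj (φ p) w ∧ ∀ q ∈ A.erase v, φ q ≠ w} ∪ (A.erase v).image φ := by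
    intro w hw
    rw [mem_filter] at hw
    rw [mem_union, mem_filter, mem_image]
    by_cases h : ∃ q ∈ A.erase v, φ q = w
    · exact Or.inr h
    · push Not at h
      exact Or.inl ⟨hw.1, hw.2, h⟩
  have h3 := (card_le_card h2).trans (card_union_le _ _)
  have h4 : #((A.erase v).image φ) ≤ #A := card_image_le.trans (card_le_card (erase_subset _ _))
  rw [h1] at h3
  exact_mod_cast h3.trans (by gcongr)

lemma le_parentSum (g : SimpleGraph V) {A : Finset V} {ℓ : V → ℕ} {v p : V}
    (hv : v ∈ A) (hp : p ∈ A) (hvp : g.Adj v p) (huniq : ∀ q ∈ A, g.Adj v q → q = p)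
    (hℓ : ℓ v = 0) {T : Host} (hT : T.Good) :
    obs g A ℓ T ≤ parentSum g (A.erase v) ℓ p T := by
  classical
  have hp' : p ∈ A.erase v := mem_erase.2 ⟨hvp.ne', hp⟩
  rw [obs_leaf g hv hp hvp huniq hℓ hT]
  unfold parentSum
  refine sum_le_sum fun φ hφ => ?_
  split_ifs with h
  swap
  · simp
  refine mul_le_mul_of_nonneg_right ?_ (wprod_nonneg _ _ _ _)
  have h1 := hT.card (φ p) ((mem_dom.1 hφ).1 p hp')
  have h2 := card_le_card (s := {w ∈ range T.N | T.adj (φ p) w ∧ ∀ q ∈ A.erase v, φ q ≠ w})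
    (t := {w ∈ range T.N | T.adj (φ p) w})
    (fun w hw => by rw [mem_filter] at hw ⊢; exact ⟨hw.1, hw.2.1⟩)
  rw [h1] at h2
  exact_mod_cast h2

/-- Improvement of `le_parentSum` when the parent has a second neighbour: the image of that
neighbour is not available to the leaf. -/
lemma le_parentSum' (g : SimpleGraph V) {A : Finset V} {ℓ : V → ℕ} {v p q : V}
    (hv : v ∈ A) (hp : p ∈ A) (hvp : g.Adj v p) (huniq : ∀ q ∈ A, g.Adj v q → q = p)
    (hq : q ∈ A) (hqv : q ≠ v) (hpq : g.Adj p q)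
    (hℓ : ℓ v = 0) {T : Host} (hT : T.Good) :
    obs g A ℓ T + obs g (A.erase v) ℓ T ≤ parentSum g (A.erase v) ℓ p T := by
  classical
  have hp' : p ∈ A.erase v := mem_erase.2 ⟨hvp.ne', hp⟩
  have hq' : q ∈ A.erase v := mem_erase.2 ⟨hqv, hq⟩
  rw [obs_leaf g hv hp hvp huniq hℓ hT]
  unfold parentSum obs
  rw [← sum_add_distrib]
  refine sum_le_sum fun φ hφ => ?_
  split_ifs with h
  swap
  · simp
  rw [← add_one_mul]
  refine mul_le_mul_of_nonneg_right ?_ (wprod_nonneg _ _ _ _)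
  have h1 := hT.card (φ p) ((mem_dom.1 hφ).1 p hp')
  have h2 := card_lt_card (s := {w ∈ range T.N | T.adj (φ p) w ∧ ∀ q ∈ A.erase v, φ q ≠ w})
    (t := {w ∈ range T.N | T.adj (φ p) w}) <| by
      rw [ssubset_iff_of_subset]
      · refine ⟨φ q, ?_, ?_⟩
        · exact mem_filter.2 ⟨mem_range.2 ((mem_dom.1 hφ).1 q hq'), h.2 p hp' q hq' hpq⟩
        · intro hcon
          exact (mem_filter.1 hcon).2.2 q hq' rfl
      · intro w hw
        rw [mem_filter] at hw ⊢; exact ⟨hw.1, hw.2.1⟩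
  rw [h1] at h2
  exact_mod_cast h2

/-- Upper bound for the drift at an undecorated leaf. Its leading coefficient, that of
`obs g A ℓ`, is the same as in `le_newPart_leaf`. -/
lemma newPart_leaf_le (g : SimpleGraph V) (α : ℝ) {A : Finset V} {ℓ : V → ℕ} {v p : V}
    (hv : v ∈ A) (hp : p ∈ A) (hvp : g.Adj v p) (huniq : ∀ q ∈ A, g.Adj v q → q = p)
    (hℓ : ℓ v = 0) {T : Host} (hT : T.Good) :
    newPart g α A ℓ v T ≤ obs g A ℓ T + (α + ℓ p + #A) * obs g (A.erase v) ℓ T +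
      ℓ p * ((ℓ p : ℝ) - 1 + α) * obs g (A.erase v) (Function.update ℓ p (ℓ p - 1)) T := by
  rw [newPart_leaf g α hv hp hvp huniq hℓ hT]
  have h1 := parentSum_le g hv hp hvp huniq hℓ hT
  have h2 := obs_nonneg g (A.erase v) ℓ T
  linarith

/-- Lower bound for the drift at an undecorated leaf, valid unless the pattern is a single
undecorated edge. The hypothesis `hdec` is what makes the coefficient of
`obs g (A.erase v) ℓ` at least `α > 0` rather than `α - 1`. -/
lemma le_newPart_leaf (g : SimpleGraph V) (α : ℝ) {A : Finset V} {ℓ : V → ℕ} {v p : V}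
    (hv : v ∈ A) (hp : p ∈ A) (hvp : g.Adj v p) (huniq : ∀ q ∈ A, g.Adj v q → q = p)
    (hdec : 1 ≤ ℓ p ∨ ∃ q ∈ A, q ≠ v ∧ g.Adj p q)
    (hℓ : ℓ v = 0) {T : Host} (hT : T.Good) :
    obs g A ℓ T + α * obs g (A.erase v) ℓ T +
      ℓ p * ((ℓ p : ℝ) - 1 + α) * obs g (A.erase v) (Function.update ℓ p (ℓ p - 1)) T ≤
    newPart g α A ℓ v T := by
  rw [newPart_leaf g α hv hp hvp huniq hℓ hT]
  have h2 := obs_nonneg g (A.erase v) ℓ T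
  rcases hdec with h | ⟨q, hq, hqv, hpq⟩
  · have h1 := le_parentSum g hv hp hvp huniq hℓ hT
    have h3 : (1 : ℝ) ≤ ℓ p := by exact_mod_cast h
    nlinarith
  · have h1 := le_parentSum' g hv hp hvp huniq hq hqv hpq hℓ hT
    have h3 : (0 : ℝ) ≤ ℓ p := by positivity
    nlinarith

/-! ### Pairs, connected patterns and plain patterns -/

lemma Valid.subset {g : SimpleGraph V} {A B : Finset V} {adj : ℕ → ℕ → Prop} {φ ψ : V → ℕ}
    (h : Valid g B adj φ) (hAB : A ⊆ B) (hψ : ∀ v ∈ A, ψ v = φ v) : Valid g A adj ψ := by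
  refine ⟨fun a ha b hb hab => ?_, fun a ha b hb hab => ?_⟩
  · rw [hψ a ha, hψ b hb] at hab
    exact h.1 (hAB ha) (hAB hb) hab
  · rw [hψ a ha, hψ b hb]
    exact h.2 a (hAB ha) b (hAB hb) hab

/-- Dropping the disjointness requirement on pairs of maps only increases the observable. -/
lemma obs_union_le (g : SimpleGraph V) {A B : Finset V} (hAB : Disjoint A B) (ℓ : V → ℕ)
    (T : Host) : obs g (A ∪ B) ℓ T ≤ obs g A ℓ T * obs g B ℓ T := by
  classical
  unfold obs
  rw [sum_mul_sum, ← sum_product']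
  set r : Finset V → (V → ℕ) → V → ℕ := fun C φ v => if v ∈ C then φ v else 0 with hr
  have hrC : ∀ C φ, ∀ v ∈ C, r C φ v = φ v := fun C φ v hv => by simp [hr, hv]
  set F : (V → ℕ) × (V → ℕ) → ℝ := fun q =>
    (if Valid g A T.adj q.1 then wprod ℓ A T.x q.1 else 0) *
      (if Valid g B T.adj q.2 then wprod ℓ B T.x q.2 else 0) with hF
  have hF0 : ∀ q, 0 ≤ F q := fun q =>
    mul_nonneg (by split_ifs <;> simp [wprod_nonneg]) (by split_ifs <;> simp [wprod_nonneg])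
  have hinj : Set.InjOn (fun φ => (r A φ, r B φ)) (dom (A ∪ B) T.N : Set (V → ℕ)) := by
    intro φ hφ ψ hψ h
    have hφ' := mem_dom.1 (mem_coe.1 hφ)
    have hψ' := mem_dom.1 (mem_coe.1 hψ)
    have h1 := congrArg Prod.fst h
    have h2 := congrArg Prod.snd h
    funext v
    by_cases hA : v ∈ A
    · rw [← hrC A φ v hA, ← hrC A ψ v hA]; exact congrFun h1 v
    · by_cases hB : v ∈ B
      · rw [← hrC B φ v hB, ← hrC B ψ v hB]; exact congrFun h2 v
      · rw [hφ'.2 v (by simp [hA, hB]), hψ'.2 v (by simp [hA, hB])]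
  calc _ ≤ ∑ φ ∈ dom (A ∪ B) T.N, F (r A φ, r B φ) := by
        refine sum_le_sum fun φ _ => ?_
        split_ifs with h
        · rw [hF]
          simp only
          rw [if_pos (h.subset subset_union_left (hrC A φ)),
            if_pos (h.subset subset_union_right (hrC B φ))]
          unfold wprod
          rw [prod_union hAB]
          exact le_of_eq (congrArg₂ _ (prod_congr rfl fun v hv => by rw [hrC A φ v hv])
            (prod_congr rfl fun v hv => by rw [hrC B φ v hv]))
        · exact hF0 _
    _ = ∑ q ∈ (dom (A ∪ B) T.N).image (fun φ => (r A φ, r B φ)), F q := (sum_image hinj).symm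
    _ ≤ ∑ q ∈ dom A T.N ×ˢ dom B T.N, F q := by
        refine sum_le_sum_of_subset_of_nonneg ?_ fun q _ _ => hF0 q
        intro q hq
        obtain ⟨φ, hφ, rfl⟩ := mem_image.1 hq
        have hφ' := mem_dom.1 hφ
        simp only [mem_product, mem_dom]
        exact ⟨⟨fun v hv => by rw [hrC A φ v hv]; exact hφ'.1 v (mem_union_left _ hv),
          fun v hv => by simp [hr, hv]⟩, ⟨fun v hv => by
            rw [hrC B φ v hv]; exact hφ'.1 v (mem_union_right _ hv),
          fun v hv => by simp [hr, hv]⟩⟩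

lemma dom_empty (N : ℕ) : dom (∅ : Finset V) N = {0} := by
  ext φ; simp [mem_dom, funext_iff]

lemma obs_single (g : SimpleGraph V) {v : V} {ℓ : V → ℕ} (hℓ : ℓ v = 0) (T : Host) :
    obs g {v} ℓ T = T.N := by
  unfold obs
  rw [sum_dom_erase (mem_singleton_self v), erase_singleton, dom_empty, sum_singleton,
    sum_congr rfl fun w _ => ?_, sum_const, card_range, nsmul_eq_mul, mul_one]
  rw [if_pos]
  · simp [wprod, hℓ]
  · refine ⟨by simp, ?_⟩
    simp

lemma obs_edge (g : SimpleGraph V) {v p : V} (hvp : g.Adj v p) {ℓ : V → ℕ} (hv : ℓ v = 0)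
    (hp : ℓ p = 0) {T : Host} (hT : T.Good) : obs g {v, p} ℓ T = 2 * T.N - 2 := by
  classical
  have he : ({v, p} : Finset V).erase v = {p} := by
    ext a; simp only [mem_erase, mem_insert, mem_singleton]
    constructor
    · tauto
    · rintro rfl; exact ⟨hvp.ne', Or.inr rfl⟩
  rw [obs_leaf g (mem_insert_self v _) (by simp : p ∈ ({v, p} : Finset V)) hvp ?_ hv hT, he,
    sum_dom_erase (mem_singleton_self p), erase_singleton, dom_empty, sum_singleton,
    sum_congr rfl (g := fun w => (T.x w : ℝ) + 1)]
  · have h := hT.total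
    rw [sum_add_distrib, sum_const, card_range, nsmul_eq_mul, mul_one, ← Nat.cast_sum]
    have : ((∑ u ∈ range T.N, T.x u : ℕ) : ℝ) + 2 = T.N := by exact_mod_cast h
    linarith
  · intro u hu
    rw [if_pos]
    · have h1 := hT.card u (mem_range.1 hu)
      have h2 : filter (fun w => T.adj u w ∧ u ≠ w) (range T.N) =
          {w ∈ range T.N | T.adj u w} := by
        refine filter_congr fun w _ => ⟨fun h => h.1, fun h => ⟨h, ?_⟩⟩
        rintro rfl
        exact hT.irrefl _ h
      simp [wprod, hp, h2, h1]
    · refine ⟨by simp, ?_⟩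
      simp
  · intro q hq hvq
    simp only [mem_insert, mem_singleton] at hq
    rcases hq with rfl | rfl
    · exact absurd hvq (g.loopless.irrefl _)
    · rfl

/-- The graph induced by `g` on `A` is connected: `A` is nonempty and every nonempty proper part of
`A` has an edge leaving it within `A`. -/
def Conn (g : SimpleGraph V) (A : Finset V) : Prop :=
  A.Nonempty ∧ ∀ B ⊆ A, B.Nonempty → B ≠ A → ∃ a ∈ B, ∃ b ∈ A, b ∉ B ∧ g.Adj a b

/-- Removing a leaf keeps a pattern connected. -/
lemma Conn.erase {g : SimpleGraph V} {A : Finset V} (h : Conn g A) {v p : V} (hv : v ∈ A)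
    (hp : p ∈ A) (hvp : g.Adj v p) (huniq : ∀ q ∈ A, g.Adj v q → q = p) :
    Conn g (A.erase v) := by
  refine ⟨⟨p, mem_erase.2 ⟨hvp.ne', hp⟩⟩, fun B hB hB0 hBne => ?_⟩
  have hvB : v ∉ B := fun h => (mem_erase.1 (hB h)).1 rfl
  have hBA : B ⊆ A := hB.trans (erase_subset _ _)
  by_cases hpB : p ∈ B
  · obtain ⟨a, ha, b, hb, hbB, hab⟩ := h.2 (insert v B)
      (insert_subset hv hBA) (insert_nonempty _ _) (by
        rintro rfl; exact hBne (by rw [erase_insert hvB]))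
    rw [mem_insert, not_or] at hbB
    rcases mem_insert.1 ha with rfl | ha
    · exact absurd (huniq b hb hab ▸ hpB) hbB.2
    · exact ⟨a, ha, b, mem_erase.2 ⟨hbB.1, hb⟩, hbB.2, hab⟩
  · obtain ⟨a, ha, b, hb, hbB, hab⟩ := h.2 B hBA hB0 (by rintro rfl; exact hvB hv)
    refine ⟨a, ha, b, mem_erase.2 ⟨?_, hb⟩, hbB, hab⟩
    rintro rfl
    exact hpB (huniq a (hBA ha) hab.symm ▸ ha)

/-- The pattern is an undecorated vertex or an undecorated edge. These are the patterns whose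
observable is a function of the size of the host alone. -/
def Plain (g : SimpleGraph V) (A : Finset V) (ℓ : V → ℕ) : Prop :=
  (∃ v, A = {v} ∧ ℓ v = 0) ∨ ∃ v p, A = {v, p} ∧ g.Adj v p ∧ ℓ v = 0 ∧ ℓ p = 0

lemma Conn.exists_adj {g : SimpleGraph V} {A : Finset V} (h : Conn g A) {ℓ : V → ℕ}
    (hA : ¬ Plain g A ℓ) {v : V} (hv : v ∈ A) (hℓ : ℓ v = 0) : ∃ p ∈ A, g.Adj v p := by
  obtain ⟨a, ha, b, hb, -, hab⟩ := h.2 {v} (singleton_subset_iff.2 hv) (singleton_nonempty v)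
    (fun h => hA (Or.inl ⟨v, h.symm, hℓ⟩))
  rw [mem_singleton] at ha
  exact ⟨b, hb, ha ▸ hab⟩

/-- In a connected pattern that is not plain, the parent of an undecorated leaf is decorated or has
another neighbour. -/
lemma Conn.parent {g : SimpleGraph V} {A : Finset V} (h : Conn g A) {ℓ : V → ℕ}
    (hA : ¬ Plain g A ℓ) {v p : V} (hv : v ∈ A) (hℓ : ℓ v = 0) (hp : p ∈ A) (hvp : g.Adj v p)
    (huniq : ∀ q ∈ A, g.Adj v q → q = p) : 1 ≤ ℓ p ∨ ∃ q ∈ A, q ≠ v ∧ g.Adj p q := by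
  by_cases hℓp : ℓ p = 0
  swap
  · exact Or.inl (Nat.one_le_iff_ne_zero.2 hℓp)
  right
  obtain ⟨a, ha, b, hb, hbB, hab⟩ := h.2 {v, p} (by
      intro a ha; simp only [mem_insert, mem_singleton] at ha; rcases ha with rfl | rfl <;>
      assumption) (insert_nonempty _ _) (fun h => hA (Or.inr ⟨v, p, h.symm, hvp, hℓ, hℓp⟩))
  simp only [mem_insert, mem_singleton, not_or] at ha hbB
  rcases ha with rfl | rfl
  · exact absurd (huniq b hb hab) hbB.2
  · exact ⟨b, hb, hbB.1, hab⟩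

lemma Plain.obs_eq {g : SimpleGraph V} {A : Finset V} {ℓ : V → ℕ} (h : Plain g A ℓ) :
    ∃ c : ℕ → ℝ, ∀ T : Host, T.Good → obs g A ℓ T = c T.N := by
  rcases h with ⟨v, rfl, hv⟩ | ⟨v, p, rfl, hvp, hv, hp⟩
  · exact ⟨fun n => n, fun T _ => obs_single g hv T⟩
  · exact ⟨fun n => 2 * n - 2, fun T hT => obs_edge g hvp hv hp hT⟩

end Combinatorics

section Moments

open Finset

/-! ### First-moment recursions -/

variable {V : Type} [Fintype V] [DecidableEq V]

/-- The functionals `E m` behave like the expectation after `m` steps of the attachment chain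
started from a deterministic tree of size `k`: they are linear, monotone on good hosts of size
`k + m`, normalised, and obey the one-step recursion of the chain. -/
structure MeanChain (α : ℝ) (k : ℕ) (E : ℕ → (Host → ℝ) → ℝ) : Prop where
  add : ∀ m f h, E m (fun T => f T + h T) = E m f + E m h
  smul : ∀ m (c : ℝ) f, E m (fun T => c * f T) = c * E m f
  mono : ∀ m f h, (∀ T : Host, T.Good → T.N = k + m → f T ≤ h T) → E m f ≤ E m h
  one : ∀ m, E m (fun _ => 1) = 1
  init : ∃ S : Host, ∀ f, E 0 f = f S
  step : ∀ m f, E (m + 1) f = E m fun T =>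
    ∑ u ∈ range T.N, ((T.x u : ℝ) + α) / ((1 + α) * ((k + m : ℕ) : ℝ) - 2) * f (T.grow u)

namespace MeanChain

variable {α : ℝ} {k : ℕ} {E : ℕ → (Host → ℝ) → ℝ}

lemma congr (hE : MeanChain α k E) {m : ℕ} {f h : Host → ℝ}
    (hfh : ∀ T : Host, T.Good → T.N = k + m → f T = h T) : E m f = E m h :=
  le_antisymm (hE.mono m f h fun T h1 h2 => (hfh T h1 h2).le)
    (hE.mono m h f fun T h1 h2 => (hfh T h1 h2).ge)

lemma zero (hE : MeanChain α k E) (m : ℕ) : E m (fun _ => 0) = 0 := by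
  have := hE.smul m 0 (fun _ => 0)
  simpa using this

lemma nonneg (hE : MeanChain α k E) {m : ℕ} {f : Host → ℝ} (hf : ∀ T, 0 ≤ f T) : 0 ≤ E m f := by
  rw [← hE.zero m]
  exact hE.mono m _ _ fun T _ _ => hf T

lemma sum (hE : MeanChain α k E) (m : ℕ) {ι : Type} (s : Finset ι) (f : ι → Host → ℝ) :
    E m (fun T => ∑ i ∈ s, f i T) = ∑ i ∈ s, E m (f i) := by
  classical
  induction s using Finset.induction_on with
  | empty => simpa using hE.zero m
  | insert a s ha ih =>
    simp_rw [sum_insert ha]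
    rw [hE.add, ih]

lemma denom_pos (hα : 0 < α) (hk : 2 ≤ k) (m : ℕ) : 0 < (1 + α) * ((k + m : ℕ) : ℝ) - 2 := by
  have : (2 : ℝ) ≤ ((k + m : ℕ) : ℝ) := by exact_mod_cast (by omega : 2 ≤ k + m)
  nlinarith

/-- One-step evolution of the mean of an observable. -/
lemma step_obs (hE : MeanChain α k E) (hα : 0 < α) (hk : 2 ≤ k) (g : SimpleGraph V)
    (A : Finset V) (ℓ : V → ℕ) (m : ℕ) :
    E (m + 1) (obs g A ℓ) = E m (obs g A ℓ) +
      ((1 + α) * ((k + m : ℕ) : ℝ) - 2)⁻¹ * ∑ v ∈ A, E m (drift g α A ℓ v) := by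
  rw [hE.step, ← hE.sum, ← hE.smul, ← hE.add]
  refine hE.congr fun T hT hN => ?_
  have hD := denom_pos hα hk m
  have htot : ∑ u ∈ range T.N, ((T.x u : ℝ) + α) = (1 + α) * ((k + m : ℕ) : ℝ) - 2 := by
    rw [sum_add_distrib, sum_const, card_range, nsmul_eq_mul, ← Nat.cast_sum, ← hN]
    have : ((∑ u ∈ range T.N, T.x u : ℕ) : ℝ) + 2 = T.N := by exact_mod_cast hT.total
    linarith
  rw [← sum_drift]
  simp_rw [mul_sub]
  rw [sum_sub_distrib, ← sum_mul, htot, mul_sub, ← mul_assoc, inv_mul_cancel₀ hD.ne', one_mul,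
    add_sub_cancel, mul_sum]
  exact sum_congr rfl fun u _ => by ring

/-- Comparison of the drifts at a vertex `v ∈ A` for the patterns `A` and `A ∪ B`. Both have the same
coefficient `W` in front of the observable itself; the remainder `R m` bounds the drift for `A` from
below, and the remainder of the drift for `A ∪ B` is at most a constant times `R m` times the mean
for `B`. The latter comes from the induction hypothesis `ih`, since the remainders involve only
patterns with a smaller number of vertices plus total decoration. -/
lemma vertex_bound (hE : MeanChain α k E) (hα : 0 < α) (g : SimpleGraph V)
    {A B : Finset V} (hAB : Disjoint A B) (hnadj : ∀ a ∈ A, ∀ b ∈ B, ¬ g.Adj a b)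
    (hA : Conn g A) (ℓ : V → ℕ) (hplain : ¬ Plain g A ℓ)
    (ih : ∀ A' ⊆ A, Conn g A' → ∀ ℓ' : V → ℕ, (∀ w ∈ B, ℓ' w = ℓ w) →
      #A' + ∑ v ∈ A', ℓ' v < #A + ∑ v ∈ A, ℓ v →
      ∃ K : ℝ, 0 ≤ K ∧ ∀ m, E m (obs g (A' ∪ B) ℓ') ≤
        K * (E m (obs g A' ℓ') * E m (obs g B ℓ')))
    {v : V} (hv : v ∈ A) :
    ∃ (W K : ℝ) (R : ℕ → ℝ), 0 ≤ W ∧ 0 ≤ K ∧ (∀ m, 0 ≤ R m) ∧ ∀ m,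
      W * E m (obs g A ℓ) + R m ≤ E m (drift g α A ℓ v) ∧
      E m (drift g α (A ∪ B) ℓ v) ≤
        W * E m (obs g (A ∪ B) ℓ) + K * R m * E m (obs g B ℓ) := by
  have ih' : ∀ A' ⊆ A, Conn g A' → ∀ ℓ' : V → ℕ, (∀ w ∈ B, ℓ' w = ℓ w) →
      #A' + ∑ v ∈ A', ℓ' v < #A + ∑ v ∈ A, ℓ v →
      ∃ K : ℝ, 0 ≤ K ∧ ∀ m, E m (obs g (A' ∪ B) ℓ') ≤
        K * (E m (obs g A' ℓ') * E m (obs g B ℓ)) := by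
    intro A' h1 h2 ℓ' h3 h4
    obtain ⟨K, hK, h⟩ := ih A' h1 h2 ℓ' h3 h4
    refine ⟨K, hK, fun m => ?_⟩
    have : obs g B ℓ' = obs g B ℓ := funext fun T => obs_congr g B h3 T
    rw [← this]
    exact h m
  have hnn : ∀ C ℓ' m, 0 ≤ E m (obs g C ℓ') := fun C ℓ' m => hE.nonneg (obs_nonneg g C ℓ')
  have hvU : v ∈ A ∪ B := mem_union_left _ hv
  have hupd : ∀ p ∈ A, ∀ c, ∀ w ∈ B, Function.update ℓ p c w = ℓ w := fun p hp c w hw =>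
    Function.update_of_ne (by rintro rfl; exact disjoint_left.1 hAB hp hw) _ _
  by_cases hℓ : ℓ v = 0
  · obtain ⟨p, hp, hvp⟩ := hA.exists_adj hplain hv hℓ
    by_cases huniq : ∀ q ∈ A, g.Adj v q → q = p
    · -- `v` is an undecorated leaf
      have huniqU : ∀ q ∈ A ∪ B, g.Adj v q → q = p := by
        intro q hq hvq
        rcases mem_union.1 hq with hq | hq
        · exact huniq q hq hvq
        · exact absurd hvq (hnadj v hv q hq)
      have hdec := hA.parent hplain hv hℓ hp hvp huniq
      have hcard : #(A.erase v) + 1 = #A := card_erase_add_one hv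
      have hsum : ∑ w ∈ A.erase v, ℓ w ≤ ∑ w ∈ A, ℓ w :=
        sum_le_sum_of_subset (erase_subset _ _)
      have hsum' : ∑ w ∈ A.erase v, Function.update ℓ p (ℓ p - 1) w ≤ ∑ w ∈ A.erase v, ℓ w := by
        refine sum_le_sum fun w _ => ?_
        by_cases hw : w = p
        · subst hw; simp
        · rw [Function.update_of_ne hw]
      obtain ⟨K₁, hK₁, h₁⟩ := ih' (A.erase v) (erase_subset _ _) (hA.erase hv hp hvp huniq) ℓ
        (fun _ _ => rfl) (by omega)
      obtain ⟨K₂, hK₂, h₂⟩ := ih' (A.erase v) (erase_subset _ _) (hA.erase hv hp hvp huniq)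
        (Function.update ℓ p (ℓ p - 1)) (hupd p hp _) (by omega)
      have hUe : (A ∪ B).erase v = A.erase v ∪ B := by
        rw [erase_union_distrib, erase_eq_of_notMem (disjoint_left.1 hAB hv)]
      have hc : 0 ≤ (ℓ p : ℝ) * ((ℓ p : ℝ) - 1 + α) := by
        rcases Nat.eq_zero_or_pos (ℓ p) with h | h
        · simp [h]
        · have : (1 : ℝ) ≤ ℓ p := by exact_mod_cast h
          exact mul_nonneg (by linarith) (by linarith)
      have hC : 0 ≤ (α + ℓ p + #(A ∪ B)) / α := by positivity
      refine ⟨1, (α + ℓ p + #(A ∪ B)) / α * K₁ + K₂, fun m => α * E m (obs g (A.erase v) ℓ) +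
        ℓ p * ((ℓ p : ℝ) - 1 + α) * E m (obs g (A.erase v) (Function.update ℓ p (ℓ p - 1))),
        zero_le_one, by positivity, fun m => ?_, fun m => ⟨?_, ?_⟩⟩
      · exact add_nonneg (mul_nonneg hα.le (hnn _ _ _)) (mul_nonneg hc (hnn _ _ _))
      · rw [one_mul, ← add_assoc, ← hE.smul, ← hE.smul, ← hE.add, ← hE.add]
        refine hE.mono m _ _ fun T hT _ => ?_
        have := le_newPart_leaf g α hv hp hvp huniq hdec hℓ hT
        simpa [drift, hℓ] using this
      · have h : E m (drift g α (A ∪ B) ℓ v) ≤ E m (obs g (A ∪ B) ℓ) +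
            (α + ℓ p + #(A ∪ B)) * E m (obs g (A.erase v ∪ B) ℓ) +
            ℓ p * ((ℓ p : ℝ) - 1 + α) *
              E m (obs g (A.erase v ∪ B) (Function.update ℓ p (ℓ p - 1))) := by
          rw [← hE.smul, ← hE.smul, ← hE.add, ← hE.add]
          refine hE.mono m _ _ fun T hT _ => ?_
          have := newPart_leaf_le g α hvU (mem_union_left _ hp) hvp huniqU hℓ hT
          rw [hUe] at this
          simpa [drift, hℓ] using this
        refine h.trans ?_
        beta_reduce
        have b0 := hnn B ℓ m
        have a1 := hnn (A.erase v) ℓ m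
        have a2 := hnn (A.erase v) (Function.update ℓ p (ℓ p - 1)) m
        have h1 := h₁ m
        have h2 := h₂ m
        set a₁ := E m (obs g (A.erase v) ℓ)
        set a₂ := E m (obs g (A.erase v) (Function.update ℓ p (ℓ p - 1)))
        set b := E m (obs g B ℓ)
        set c := (ℓ p : ℝ) * ((ℓ p : ℝ) - 1 + α)
        have e : α + ℓ p + #(A ∪ B) = (α + ℓ p + #(A ∪ B)) / α * α := by
          field_simp
        set C := (α + ℓ p + #(A ∪ B)) / α
        clear_value C c a₁ a₂ b
        rw [e]
        have i1 : C * α * E m (obs g (A.erase v ∪ B) ℓ) ≤ C * α * (K₁ * (a₁ * b)) :=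
          mul_le_mul_of_nonneg_left h1 (by positivity)
        have i2 : c * E m (obs g (A.erase v ∪ B) (Function.update ℓ p (ℓ p - 1))) ≤
            c * (K₂ * (a₂ * b)) := mul_le_mul_of_nonneg_left h2 hc
        have i3 : 0 ≤ C * K₁ * (c * a₂) * b := by positivity
        have i4 : 0 ≤ K₂ * (α * a₁) * b := by positivity
        linarith
    · -- `v` has two neighbours, so it cannot sit at the new vertex
      push Not at huniq
      obtain ⟨q, hq, hvq, hqp⟩ := huniq
      refine ⟨0, 0, fun _ => 0, le_rfl, le_rfl, fun _ => le_rfl, fun m => ⟨?_, ?_⟩⟩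
      · simp only [zero_mul, add_zero]
        refine hE.zero m ▸ hE.mono m _ _ fun T hT _ => ?_
        rw [drift, newPart_of_two g α hv hq hp hqp hvq hvp hT, hℓ, Nat.cast_zero, zero_mul, add_zero]
      · simp only [zero_mul, add_zero]
        refine (hE.zero m).symm ▸ hE.mono m _ _ fun T hT _ => ?_
        rw [drift, newPart_of_two g α hvU (mem_union_left _ hq) (mem_union_left _ hp) hqp hvq hvp hT,
          hℓ, Nat.cast_zero, zero_mul, add_zero]
  · -- `v` is decorated
    have hℓ1 : 1 ≤ ℓ v := Nat.one_le_iff_ne_zero.2 hℓ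
    have hlt : ∑ w ∈ A, Function.update ℓ v (ℓ v - 1) w < ∑ w ∈ A, ℓ w := by
      refine sum_lt_sum (fun w _ => ?_) ⟨v, hv, by rw [Function.update_self]; omega⟩
      by_cases hw : w = v
      · subst hw; simp
      · rw [Function.update_of_ne hw]
    obtain ⟨K, hK, h⟩ := ih' A Subset.rfl hA (Function.update ℓ v (ℓ v - 1)) (hupd v hv _)
      (by omega)
    have hc : 0 ≤ (ℓ v : ℝ) * ((ℓ v : ℝ) - 1 + α) := by
      have : (1 : ℝ) ≤ ℓ v := by exact_mod_cast hℓ1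
      exact mul_nonneg (by linarith) (by linarith)
    have hdr : ∀ C : Finset V, v ∈ C → ∀ m, E m (drift g α C ℓ v) = ℓ v * E m (obs g C ℓ) +
        ℓ v * ((ℓ v : ℝ) - 1 + α) * E m (obs g C (Function.update ℓ v (ℓ v - 1))) := by
      intro C hvC m
      rw [← hE.smul, ← hE.smul, ← hE.add]
      refine hE.congr fun T _ _ => ?_
      rw [drift, newPart_of_pos g α hvC hℓ1]
      ring
    refine ⟨ℓ v, K, fun m => ℓ v * ((ℓ v : ℝ) - 1 + α) *
      E m (obs g A (Function.update ℓ v (ℓ v - 1))), by positivity, hK,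
      fun m => mul_nonneg hc (hnn _ _ _), fun m => ⟨(hdr A hv m).ge, ?_⟩⟩
    rw [hdr _ hvU m]
    have := mul_le_mul_of_nonneg_left (h m) hc
    linarith

/-- The observable of a plain pattern is deterministic, so the crude bound `obs_union_le` already
factorises in mean. -/
lemma plain_bound (hE : MeanChain α k E) (g : SimpleGraph V)
    {A B : Finset V} (hAB : Disjoint A B) (ℓ : V → ℕ) (hplain : Plain g A ℓ) (m : ℕ) :
    E m (obs g (A ∪ B) ℓ) ≤ E m (obs g A ℓ) * E m (obs g B ℓ) := by
  obtain ⟨c, hc⟩ := hplain.obs_eq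
  have h1 : E m (obs g A ℓ) = c (k + m) := by
    rw [hE.congr (h := fun _ => c (k + m) * 1) fun T hT hN => by rw [hc T hT, hN, mul_one],
      hE.smul, hE.one, mul_one]
  rw [h1, ← hE.smul]
  refine hE.mono m _ _ fun T hT hN => ?_
  have := obs_union_le g hAB ℓ T
  rwa [hc T hT, hN] at this

/-- The first moment of a disjoint pair is bounded by the product of the first moments, uniformly in
the number of steps. The induction is on the total number of vertices and decorations. -/
theorem pair_bound (hE : MeanChain α k E) (hα : 0 < α) (hk : 2 ≤ k) (g : SimpleGraph V) (s : ℕ) :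
    ∀ (A B : Finset V) (ℓ : V → ℕ), Disjoint A B → (∀ a ∈ A, ∀ b ∈ B, ¬ g.Adj a b) →
      Conn g A → Conn g B → (#A + ∑ v ∈ A, ℓ v) + (#B + ∑ v ∈ B, ℓ v) = s →
      ∃ K : ℝ, 0 ≤ K ∧ ∀ m, E m (obs g (A ∪ B) ℓ) ≤
        K * (E m (obs g A ℓ) * E m (obs g B ℓ)) := by
  induction s using Nat.strong_induction_on with
  | _ s ih =>
  intro A B ℓ hAB hnadj hA hB hs
  by_cases hpA : Plain g A ℓ
  · exact ⟨1, zero_le_one, fun m => by rw [one_mul]; exact hE.plain_bound g hAB ℓ hpA m⟩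
  by_cases hpB : Plain g B ℓ
  · refine ⟨1, zero_le_one, fun m => ?_⟩
    rw [one_mul, union_comm, mul_comm]
    exact hE.plain_bound g hAB.symm ℓ hpB m
  have hnadj' : ∀ b ∈ B, ∀ a ∈ A, ¬ g.Adj b a := fun b hb a ha h => hnadj a ha b hb h.symm
  have vA := fun v (hv : v ∈ A) => hE.vertex_bound hα g hAB hnadj hA ℓ hpA (by
    intro A' hA' hcA' ℓ' hℓ' hlt
    have hBsum : ∑ v ∈ B, ℓ' v = ∑ v ∈ B, ℓ v := sum_congr rfl hℓ'
    exact ih _ (by rw [← hs, ← hBsum]; omega) A' B ℓ' (disjoint_of_subset_left hA' hAB)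
      (fun a ha => hnadj a (hA' ha)) hcA' hB rfl) hv
  have vB := fun v (hv : v ∈ B) => hE.vertex_bound hα g hAB.symm hnadj' hB ℓ hpB (by
    intro B' hB' hcB' ℓ' hℓ' hlt
    have hAsum : ∑ v ∈ A, ℓ' v = ∑ v ∈ A, ℓ v := sum_congr rfl hℓ'
    exact ih _ (by rw [← hs, ← hAsum]; omega) B' A ℓ' (disjoint_of_subset_left hB' hAB.symm)
      (fun a ha => hnadj' a (hB' ha)) hcB' hA rfl) hv
  choose! WA KA RA hWA hKA hRA hvA using vA
  choose! WB KB RB hWB hKB hRB hvB using vB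
  have hnn : ∀ C m, 0 ≤ E m (obs g C ℓ) := fun C m => hE.nonneg (obs_nonneg g C ℓ)
  have hKA0 : 0 ≤ ∑ v ∈ A, KA v := sum_nonneg hKA
  have hKB0 : 0 ≤ ∑ v ∈ B, KB v := sum_nonneg hKB
  set K : ℝ := 1 + ∑ v ∈ A, KA v + ∑ v ∈ B, KB v with hK
  have hKA' : ∀ v ∈ A, KA v ≤ K := fun v hv => by
    have := single_le_sum hKA hv
    linarith
  have hKB' : ∀ v ∈ B, KB v ≤ K := fun v hv => by
    have := single_le_sum hKB hv
    linarith
  have hK0 : 0 ≤ K := by linarith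
  refine ⟨K, hK0, fun m => ?_⟩
  induction m with
  | zero =>
    obtain ⟨S, hS⟩ := hE.init
    rw [hS, hS, hS]
    have h1 := obs_union_le g hAB ℓ S
    have h2 := mul_nonneg (obs_nonneg g A ℓ S) (obs_nonneg g B ℓ S)
    nlinarith
  | succ m ihm =>
    rw [hE.step_obs hα hk, hE.step_obs hα hk, hE.step_obs hα hk, sum_union hAB]
    have hD : 0 ≤ ((1 + α) * ((k + m : ℕ) : ℝ) - 2)⁻¹ := (inv_pos.2 (denom_pos hα hk m)).le
    set D := ((1 + α) * ((k + m : ℕ) : ℝ) - 2)⁻¹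
    have a0 := hnn A m
    have b0 := hnn B m
    set a := E m (obs g A ℓ)
    set b := E m (obs g B ℓ)
    set p := E m (obs g (A ∪ B) ℓ)
    have uA : ∑ v ∈ A, E m (drift g α (A ∪ B) ℓ v) ≤
        K * ((∑ v ∈ A, E m (drift g α A ℓ v)) * b) := by
      rw [sum_mul, mul_sum]
      refine sum_le_sum fun v hv => ?_
      obtain ⟨h1, h2⟩ := hvA v hv m
      calc _ ≤ WA v * p + KA v * RA v m * b := h2
        _ ≤ WA v * (K * (a * b)) + K * RA v m * b := by
            have := hRA v hv m
            have := hWA v hv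
            have := hKA' v hv
            gcongr
        _ = K * ((WA v * a + RA v m) * b) := by ring
        _ ≤ _ := by gcongr
    have uB : ∑ v ∈ B, E m (drift g α (A ∪ B) ℓ v) ≤
        K * (a * ∑ v ∈ B, E m (drift g α B ℓ v)) := by
      rw [mul_sum, mul_sum]
      refine sum_le_sum fun v hv => ?_
      obtain ⟨h1, h2⟩ := hvB v hv m
      rw [union_comm B A] at h2
      calc _ ≤ WB v * p + KB v * RB v m * a := h2
        _ ≤ WB v * (K * (a * b)) + K * RB v m * a := by
            have := hRB v hv m
            have := hWB v hv
            have := hKB' v hv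
            gcongr
        _ = K * (a * (WB v * b + RB v m)) := by ring
        _ ≤ _ := by gcongr
    have nA : 0 ≤ ∑ v ∈ A, E m (drift g α A ℓ v) := sum_nonneg fun v hv =>
      le_trans (add_nonneg (mul_nonneg (hWA v hv) a0) (hRA v hv m)) (hvA v hv m).1
    have nB : 0 ≤ ∑ v ∈ B, E m (drift g α B ℓ v) := sum_nonneg fun v hv =>
      le_trans (add_nonneg (mul_nonneg (hWB v hv) b0) (hRB v hv m)) (hvB v hv m).1
    -- The product of the two means at time `m + 1` exceeds its linearisation by the product of the
    -- increments, which is nonnegative.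
    set X := ∑ v ∈ A, E m (drift g α A ℓ v)
    set Y := ∑ v ∈ B, E m (drift g α B ℓ v)
    calc _ ≤ K * (a * b) + D * (K * (X * b) + K * (a * Y)) := by gcongr
      _ ≤ K * (a * b) + D * (K * (X * b) + K * (a * Y)) + K * ((D * X) * (D * Y)) := by
          have : 0 ≤ K * ((D * X) * (D * Y)) := by positivity
          linarith
      _ = _ := by ring

end MeanChain

end Moments

section Trees

open Finset

/-! ### Trees as hosts -/

open Classical in
lemma degR_eq_sum {n : ℕ} (G : SimpleGraph (Fin n)) (v : Fin n) :
    degR G v = ∑ w, if G.Adj v w then 1 else 0 := by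
  rw [degR, Nat.card_eq_fintype_card, Fintype.card_subtype, card_filter]

open Classical in
lemma degR_eq_degree {n : ℕ} (G : SimpleGraph (Fin n)) (v : Fin n) : degR G v = G.degree v := by
  rw [degR_eq_sum, ← card_filter, ← SimpleGraph.card_neighborFinset_eq_degree,
    SimpleGraph.neighborFinset_eq_filter]

/-- Trees on `n` vertices are the connected graphs whose degrees sum to `2 (n - 1)`. -/
lemma isTree_iff_sum_degR {n : ℕ} (G : SimpleGraph (Fin n)) :
    G.IsTree ↔ G.Connected ∧ ∑ v, degR G v + 2 = 2 * n := by
  classical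
  rw [SimpleGraph.isTree_iff_connected_and_card]
  have h := G.sum_degrees_eq_twice_card_edges
  simp only [← degR_eq_degree] at h
  rw [h, ← SimpleGraph.coe_edgeFinset, Nat.card_eq_fintype_card, Nat.card_eq_fintype_card,
    Fintype.card_fin]
  simp only [Fintype.card_coe, coe_sort_coe]
  constructor <;> rintro ⟨h1, h2⟩ <;> exact ⟨h1, by omega⟩

lemma one_le_degR {n : ℕ} (hn : 2 ≤ n) {G : SimpleGraph (Fin n)} (hG : G.Connected) (v : Fin n) :
    1 ≤ degR G v := by
  classical
  have : Nontrivial (Fin n) := Fin.nontrivial_iff_two_le.2 hn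
  rw [degR_eq_degree]
  exact hG.preconnected.degree_pos_of_nontrivial v

lemma extendTree_adj_castSucc {n : ℕ} (G : SimpleGraph (Fin n)) (u a b : Fin n) :
    (extendTree G u).Adj a.castSucc b.castSucc ↔ G.Adj a b := by
  have h1 : ∀ i : Fin n, Fin.castSucc i ≠ Fin.last n := fun i => (Fin.castSucc_lt_last i).ne
  simp only [extendTree, SimpleGraph.fromRel_adj, Fin.castSucc_inj, ne_eq, h1, and_false, or_false]
  constructor
  · rintro ⟨_, ⟨a', b', rfl, rfl, h⟩ | ⟨a', b', rfl, rfl, h⟩⟩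
    · exact h
    · exact h.symm
  · exact fun h => ⟨h.ne, Or.inl ⟨a, b, rfl, rfl, h⟩⟩

lemma extendTree_adj_last {n : ℕ} (G : SimpleGraph (Fin n)) (u a : Fin n) :
    (extendTree G u).Adj a.castSucc (Fin.last n) ↔ a = u := by
  have h1 : ∀ i : Fin n, Fin.castSucc i ≠ Fin.last n := fun i => (Fin.castSucc_lt_last i).ne
  simp only [extendTree, SimpleGraph.fromRel_adj, ne_eq, h1, (h1 _).symm, Fin.castSucc_inj,
    false_and, and_false, exists_false, and_true, or_false, false_or, not_false_eq_true, true_and]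

lemma degR_extendTree_castSucc {n : ℕ} (G : SimpleGraph (Fin n)) (u a : Fin n) :
    degR (extendTree G u) a.castSucc = degR G a + if a = u then 1 else 0 := by
  classical
  simp only [degR_eq_sum, Fin.sum_univ_castSucc, extendTree_adj_castSucc, extendTree_adj_last]

lemma degR_extendTree_last {n : ℕ} (G : SimpleGraph (Fin n)) (u : Fin n) :
    degR (extendTree G u) (Fin.last n) = 1 := by
  classical
  simp only [degR_eq_sum, Fin.sum_univ_castSucc, SimpleGraph.adj_comm _ (Fin.last n),
    extendTree_adj_last, SimpleGraph.irrefl, if_false, sum_ite_eq', mem_univ, if_true, add_zero]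

lemma isTree_extendTree {n : ℕ} {G : SimpleGraph (Fin n)} (hG : G.IsTree) (u : Fin n) :
    (extendTree G u).IsTree := by
  rw [isTree_iff_sum_degR] at hG ⊢
  refine ⟨?_, ?_⟩
  · let f : G →g extendTree G u := ⟨Fin.castSucc, fun h => (extendTree_adj_castSucc G u _ _).2 h⟩
    have h : ∀ v, (extendTree G u).Reachable u.castSucc v := by
      intro v
      induction v using Fin.lastCases with
      | last => exact ((extendTree_adj_last G u u).2 rfl).reachable
      | cast i => exact (hG.1.preconnected u i).map f
    exact (SimpleGraph.connected_iff _).2 ⟨fun v w => (h v).symm.trans (h w), ⟨u.castSucc⟩⟩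
  · simp only [Fin.sum_univ_castSucc, degR_extendTree_castSucc, degR_extendTree_last,
      sum_add_distrib, sum_ite_eq', mem_univ, if_true]
    have := hG.2
    omega

/-- A graph on `Fin n` as a host. The truncated subtraction `degR - 1` is the true difference on
connected graphs with at least two vertices. -/
def toHost {n : ℕ} (G : SimpleGraph (Fin n)) : Host where
  N := n
  adj a b := ∃ (ha : a < n) (hb : b < n), G.Adj ⟨a, ha⟩ ⟨b, hb⟩
  x a := if h : a < n then degR G ⟨a, h⟩ - 1 else 0

lemma toHost_x {n : ℕ} (G : SimpleGraph (Fin n)) (a : Fin n) : (toHost G).x a = degR G a - 1 := by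
  simp [toHost]

lemma toHost_adj {n : ℕ} (G : SimpleGraph (Fin n)) (a b : Fin n) :
    (toHost G).adj a b ↔ G.Adj a b := by
  simp [toHost]

lemma toHost_extendTree {n : ℕ} (G : SimpleGraph (Fin n)) (u : Fin n) (hu : 1 ≤ degR G u) :
    toHost (extendTree G u) = (toHost G).grow u := by
  have hadj : (toHost (extendTree G u)).adj = ((toHost G).grow u).adj := by
    funext a b
    refine propext ?_
    by_cases hab : a < n + 1 ∧ b < n + 1
    swap
    · simp only [toHost, Host.grow]
      have := u.2
      constructor
      · rintro ⟨ha, hb, -⟩; exact absurd ⟨ha, hb⟩ hab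
      · rintro (⟨ha, hb, -⟩ | h | h) <;> exact absurd (by omega) hab
    obtain ⟨ha, hb⟩ := hab
    have key : (toHost (extendTree G u)).adj a b ↔ (extendTree G u).Adj ⟨a, ha⟩ ⟨b, hb⟩ :=
      toHost_adj (extendTree G u) ⟨a, ha⟩ ⟨b, hb⟩
    rw [key]
    generalize hA : (⟨a, ha⟩ : Fin (n + 1)) = A
    generalize hB : (⟨b, hb⟩ : Fin (n + 1)) = B
    obtain rfl : a = A := by rw [← hA]
    obtain rfl : b = B := by rw [← hB]
    have hu := u.2
    clear hA hB ha hb key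
    induction A using Fin.lastCases with
    | last =>
      induction B using Fin.lastCases with
      | last =>
        simp [toHost, Host.grow]
        omega
      | cast j =>
        have := j.2
        rw [SimpleGraph.adj_comm, extendTree_adj_last]
        simp [toHost, Host.grow, Fin.ext_iff]
        omega
    | cast i =>
      have := i.2
      induction B using Fin.lastCases with
      | last =>
        rw [extendTree_adj_last]
        simp [toHost, Host.grow, Fin.ext_iff]
        omega
      | cast j =>
        have := j.2
        rw [extendTree_adj_castSucc]
        simp [toHost, Host.grow]
        omega
  have hx : (toHost (extendTree G u)).x = ((toHost G).grow u).x := by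
    funext a
    by_cases ha : a < n + 1
    swap
    · have := u.2
      simp only [toHost, Host.grow, dif_neg ha]
      rw [Function.update_of_ne (by omega), Function.update_of_ne (by omega), dif_neg (by omega)]
    have key := toHost_x (extendTree G u) ⟨a, ha⟩
    simp only at key
    rw [key]
    generalize hA : (⟨a, ha⟩ : Fin (n + 1)) = A
    obtain rfl : a = A := by rw [← hA]
    clear hA ha key
    induction A using Fin.lastCases with
    | last =>
      rw [degR_extendTree_last]
      simp [toHost, Host.grow]
    | cast i =>
      rw [degR_extendTree_castSucc]
      have hi := i.2
      simp only [Host.grow, Fin.val_castSucc]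
      rw [Function.update_of_ne (show (i : ℕ) ≠ (toHost G).N from hi.ne)]
      by_cases hiu : i = u
      · subst hiu
        rw [Function.update_self, toHost_x]
        simp
        omega
      · rw [Function.update_of_ne (fun h => hiu (Fin.ext h)), toHost_x]
        simp [hiu]
  show Host.mk _ _ _ = Host.mk _ _ _
  rw [Host.mk.injEq]
  exact ⟨rfl, hadj, hx⟩

lemma toHost_good {n : ℕ} (hn : 2 ≤ n) {G : SimpleGraph (Fin n)} (hG : G.IsTree) :
    (toHost G).Good where
  symm := by rintro a b ⟨ha, hb, h⟩; exact ⟨hb, ha, h.symm⟩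
  irrefl := by rintro a ⟨ha, hb, h⟩; exact h.ne rfl
  lt := by rintro a b ⟨ha, hb, h⟩; exact hb
  card := by
    classical
    intro u hu
    lift u to Fin n using hu
    have hd := one_le_degR hn hG.connected u
    rw [toHost_x, Nat.sub_add_cancel hd, card_filter, sum_range, degR_eq_sum]
    refine sum_congr rfl fun w _ => ?_
    exact if_congr (toHost_adj G u w) rfl rfl
  total := by
    show ∑ u ∈ range n, _ + 2 = n
    rw [sum_range]
    rw [sum_congr rfl fun v _ => toHost_x G v]
    have h := ((isTree_iff_sum_degR G).1 hG).2
    have : ∑ v, degR G v = ∑ v, (degR G v - 1) + n := by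
      have h1 : ∑ _v : Fin n, 1 = n := by simp
      calc ∑ v, degR G v = ∑ v, ((degR G v - 1) + 1) :=
            sum_congr rfl fun v _ => by have := one_le_degR hn hG.connected v; omega
        _ = _ := by rw [sum_add_distrib, h1]
    omega

end Trees

section Law

open Finset

/-! ### The law of the attachment trees -/

instance {n : ℕ} : DiscreteMeasurableSpace (SimpleGraph (Fin n)) := ⟨fun _ => trivial⟩

instance {n : ℕ} (α : ℝ) (G : SimpleGraph (Fin n)) : IsFiniteMeasure (stepMeasure α G) := by
  refine ⟨?_⟩
  simp [stepMeasure, ENNReal.sum_lt_top]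

lemma integral_stepMeasure {n : ℕ} (α : ℝ) (G : SimpleGraph (Fin n))
    (f : SimpleGraph (Fin (n + 1)) → ℝ) :
    ∫ G', f G' ∂stepMeasure α G = ∑ u,
      (ENNReal.ofReal (((degR G u : ℝ) - 1 + α) / ((1 + α) * (n : ℝ) - 2))).toReal *
        f (extendTree G u) := by
  rw [stepMeasure, integral_finsetSum_measure]
  · simp
  · exact fun u _ => Integrable.smul_measure (Integrable.of_finite) ENNReal.ofReal_ne_top

/-- One step of the dynamics as a finite kernel. Only at trees is it a probability measure. -/
def stepKernel (α : ℝ) (n : ℕ) :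
    ProbabilityTheory.Kernel (SimpleGraph (Fin n)) (SimpleGraph (Fin (n + 1))) :=
  ⟨stepMeasure α, Measurable.of_discrete⟩

instance (α : ℝ) (n : ℕ) : ProbabilityTheory.IsFiniteKernel (stepKernel α n) := by
  classical
  refine ⟨∑ G : SimpleGraph (Fin n), stepMeasure α G Set.univ, ?_, fun G => ?_⟩
  · simp [ENNReal.sum_lt_top]
  · exact single_le_sum (f := fun G : SimpleGraph (Fin n) => stepMeasure α G Set.univ)
      (fun _ _ => bot_le) (mem_univ G)

instance (α : ℝ) {k : ℕ} (S : SimpleGraph (Fin k)) (m : ℕ) : IsFiniteMeasure (paLaw α S m) := by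
  induction m with
  | zero => exact inferInstanceAs (IsFiniteMeasure (Measure.dirac S))
  | succ m ih => exact inferInstanceAs (IsFiniteMeasure ((paLaw α S m).bind (stepKernel α (k + m))))

lemma integral_paLaw_succ (α : ℝ) {k : ℕ} (S : SimpleGraph (Fin k)) (m : ℕ)
    (f : SimpleGraph (Fin (k + m + 1)) → ℝ) :
    ∫ G, f G ∂paLaw α S (m + 1) =
      ∫ G, (∫ G', f G' ∂stepMeasure α G) ∂paLaw α S m := by
  exact ProbabilityTheory.Kernel.integral_comp (η := stepKernel α (k + m))
    (κ := ProbabilityTheory.Kernel.const Unit (paLaw α S m)) (a := ()) (f := f)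
    Integrable.of_finite

lemma ae_isTree_paLaw (α : ℝ) {k : ℕ} {S : SimpleGraph (Fin k)} (hS : S.IsTree) (m : ℕ) :
    ∀ᵐ G ∂paLaw α S m, G.IsTree := by
  induction m with
  | zero => 
    show ∀ᵐ G ∂Measure.dirac S, G.IsTree
    rw [ae_dirac_eq]
    exact hS
  | succ m ih =>
    show ∀ᵐ G ∂((paLaw α S m).bind (stepMeasure α)), G.IsTree
    rw [ae_iff, Measure.bind_apply (MeasurableSet.of_discrete) Measurable.of_discrete.aemeasurable,
      lintegral_eq_zero_iff' Measurable.of_discrete.aemeasurable]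
    filter_upwards [ih] with G hG
    simp [stepMeasure, isTree_extendTree hG]

/-- At a tree, the attachment probabilities sum to `1`. -/
lemma sum_degR_weights {n : ℕ} (hn : 2 ≤ n) {α : ℝ} (hα : 0 < α) {G : SimpleGraph (Fin n)}
    (hG : G.IsTree) :
    ∑ u, ((degR G u : ℝ) - 1 + α) / ((1 + α) * (n : ℝ) - 2) = 1 := by
  have h2 : (2 : ℝ) ≤ n := by exact_mod_cast hn
  have hD : (0 : ℝ) < (1 + α) * (n : ℝ) - 2 := by nlinarith
  rw [← sum_div, div_eq_one_iff_eq hD.ne']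
  have h : ∑ v, (degR G v : ℝ) + 2 = 2 * n := by
    exact_mod_cast ((isTree_iff_sum_degR G).1 hG).2
  simp only [sum_add_distrib, sum_sub_distrib, sum_const, card_univ, Fintype.card_fin,
    nsmul_eq_mul]
  linarith

lemma integral_stepMeasure_of_isTree {n : ℕ} (hn : 2 ≤ n) {α : ℝ} (hα : 0 < α)
    {G : SimpleGraph (Fin n)} (hG : G.IsTree) (f : SimpleGraph (Fin (n + 1)) → ℝ) :
    ∫ G', f G' ∂stepMeasure α G = ∑ u,
      ((degR G u : ℝ) - 1 + α) / ((1 + α) * (n : ℝ) - 2) * f (extendTree G u) := by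
  have h2 : (2 : ℝ) ≤ n := by exact_mod_cast hn
  have hD : (0 : ℝ) < (1 + α) * (n : ℝ) - 2 := by nlinarith
  rw [integral_stepMeasure]
  refine sum_congr rfl fun u _ => ?_
  have h1 : (1 : ℝ) ≤ degR G u := by exact_mod_cast one_le_degR hn hG.connected u
  rw [ENNReal.toReal_ofReal (div_nonneg (by linarith) hD.le)]

/-- The expectations under the laws of the attachment trees form a `MeanChain`. -/
lemma meanChain_paLaw {α : ℝ} (hα : 0 < α) {k : ℕ} (hk : 2 ≤ k) {S : SimpleGraph (Fin k)}
    (hS : S.IsTree) : MeanChain α k fun m f => ∫ G, f (toHost G) ∂paLaw α S m where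
  add m f h := integral_add Integrable.of_finite Integrable.of_finite
  smul m c f := integral_const_mul _ _
  mono m f h hfh := by
    refine integral_mono_ae Integrable.of_finite Integrable.of_finite ?_
    filter_upwards [ae_isTree_paLaw α hS m] with G hG
    exact hfh _ (toHost_good (by omega) hG) rfl
  one m := by
    induction m with
    | zero => exact integral_dirac _ _
    | succ m ih =>
      rw [integral_paLaw_succ]
      refine (integral_congr_ae ?_).trans ih
      filter_upwards [ae_isTree_paLaw α hS m] with G hG
      rw [integral_stepMeasure_of_isTree (by omega) hα hG]
      simpa only [mul_one] using sum_degR_weights (by omega) hα hG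
  init := ⟨toHost S, fun f => integral_dirac _ _⟩
  step m f := by
    rw [integral_paLaw_succ]
    refine integral_congr_ae ?_
    filter_upwards [ae_isTree_paLaw α hS m] with G hG
    rw [integral_stepMeasure_of_isTree (by omega) hα hG]
    show _ = ∑ u ∈ range (k + m), _
    rw [sum_range]
    refine sum_congr rfl fun u _ => ?_
    have h1 := one_le_degR (by omega) hG.connected u
    rw [toHost_x, toHost_extendTree G u h1, Nat.cast_sub h1, Nat.cast_one]

end Law

section Link

open Finset

/-! ### Embeddings of trees -/

/-- An injective homomorphism from a connected graph to an acyclic graph is an induced embedding: the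
image of a path from `a` to `b` is the unique path from `f a` to `f b`, hence a single edge. -/
lemma adj_of_injective_hom {W W' : Type*} {τ : SimpleGraph W} {G : SimpleGraph W'}
    (hτ : τ.Connected) (hG : G.IsAcyclic) (f : τ →g G) (hf : Function.Injective f) {a b : W}
    (h : G.Adj (f a) (f b)) : τ.Adj a b := by
  classical
  obtain ⟨p, hp⟩ := (hτ.preconnected a b).exists_isPath
  have h1 := (hG.subsingleton_path (f a) (f b)).elim ⟨p.map f, hp.map hf⟩
    (SimpleGraph.Path.singleton h)
  have h2 : (p.map f).length = 1 := by
    have := congrArg (fun q : G.Path (f a) (f b) => (q : G.Walk (f a) (f b)).length) h1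
    simpa [SimpleGraph.Path.singleton] using this
  rw [SimpleGraph.Walk.length_map] at h2
  exact SimpleGraph.Walk.adj_of_length_eq_one h2

lemma wprod_toHost {V W : Type} [Fintype W] [DecidableEq V] {n : ℕ} (G : SimpleGraph (Fin n))
    (ι : W ↪ V) (ℓ : V → ℕ) (φ : W → Fin n) (ψ : V → ℕ) (h : ∀ w, ψ (ι w) = φ w) :
    wprod ℓ (univ.map ι) (toHost G).x ψ = embWeight G (fun w => ℓ (ι w)) φ := by
  rw [wprod, embWeight, prod_map]
  refine prod_congr rfl fun w _ => ?_
  rw [h, toHost_x]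

/-- In an acyclic host, `obs` of a copy of a connected graph `τ` inside the ambient graph is the observable of `τ`. -/
lemma obs_toHost {V W : Type} [Fintype V] [DecidableEq V] [Fintype W] {n : ℕ}
    {G : SimpleGraph (Fin n)} (hG : G.IsAcyclic) {τ : SimpleGraph W} (hτ : τ.Connected)
    {g : SimpleGraph V} (ι : τ ↪g g) (ℓ : V → ℕ) :
    obs g (univ.map ι.toEmbedding) ℓ (toHost G) = obsG τ (fun w => ℓ (ι w)) G := by
  classical
  have : Finite (τ ↪g G) := DFunLike.finite _
  have : Fintype (τ ↪g G) := Fintype.ofFinite _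
  rw [obs, obsG, finsum_eq_sum_of_fintype, ← sum_filter]
  have hext : ∀ (φ : τ ↪g G) w, Function.extend ι (fun w => ((φ w : Fin n) : ℕ)) 0 (ι w) = φ w :=
    fun φ w => ι.injective.extend_apply _ _ w
  symm
  refine sum_nbij (fun φ => Function.extend ι (fun w => ((φ w : Fin n) : ℕ)) 0) ?_ ?_ ?_ ?_
  · intro φ _
    rw [mem_filter, mem_dom]
    refine ⟨⟨?_, ?_⟩, ?_, ?_⟩
    · intro v hv
      obtain ⟨w, -, rfl⟩ := mem_map.1 hv
      exact (hext φ w).trans_lt (φ w).2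
    · intro v hv
      refine Function.extend_apply' _ _ _ ?_
      rintro ⟨w, rfl⟩
      exact hv (mem_map_of_mem _ (mem_univ w))
    · intro v hv v' hv' h
      obtain ⟨w, -, rfl⟩ := mem_map.1 (mem_coe.1 hv)
      obtain ⟨w', -, rfl⟩ := mem_map.1 (mem_coe.1 hv')
      have h' : ((φ w : Fin n) : ℕ) = φ w' := by
        rw [← hext φ w, ← hext φ w']; exact h
      rw [φ.injective (Fin.ext h')]
    · intro v hv v' hv' h
      obtain ⟨w, -, rfl⟩ := mem_map.1 hv
      obtain ⟨w', -, rfl⟩ := mem_map.1 hv'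
      have h' : G.Adj (φ w) (φ w') := φ.map_adj_iff.2 (ι.map_adj_iff.1 h)
      rw [← toHost_adj, ← hext φ w, ← hext φ w'] at h'
      exact h'
  · intro φ _ φ' _ h
    ext w
    have := congrFun h (ι w)
    simp only [hext] at this
    exact this
  · intro ψ hψ
    rw [mem_coe, mem_filter, mem_dom] at hψ
    obtain ⟨⟨h1, h2⟩, h3, h4⟩ := hψ
    have hm : ∀ w, ι w ∈ univ.map ι.toEmbedding := fun w => mem_map_of_mem _ (mem_univ w)
    let f : τ →g G := ⟨fun w => ⟨ψ (ι w), h1 _ (hm w)⟩, fun {a b} hab => by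
      rw [← toHost_adj]
      exact h4 _ (hm a) _ (hm b) (ι.map_adj_iff.2 hab)⟩
    have hf : Function.Injective f := fun a b hab =>
      ι.injective (h3 (hm a) (hm b) (congrArg Fin.val hab))
    let φ : τ ↪g G := ⟨⟨f, hf⟩, fun {a b} => ⟨adj_of_injective_hom hτ hG f hf, f.map_adj⟩⟩
    refine ⟨φ, mem_univ _, ?_⟩
    funext v
    by_cases hv : v ∈ univ.map ι.toEmbedding
    · obtain ⟨w, -, rfl⟩ := mem_map.1 hv
      exact hext φ w
    · rw [h2 v hv]
      refine Function.extend_apply' _ _ _ ?_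
      rintro ⟨w, rfl⟩
      exact hv (hm w)
  · intro φ _
    exact (wprod_toHost G ι.toEmbedding ℓ φ _ (hext φ)).symm

/-- Pairs of embeddings with disjoint images are among the injective homomorphisms of the disjoint
union. -/
lemma obsDisjG_le {V₁ V₂ : Type} [Fintype V₁] [Fintype V₂] [DecidableEq V₁] [DecidableEq V₂]
    {n : ℕ} (G : SimpleGraph (Fin n))
    (τ : SimpleGraph V₁) (ℓτ : V₁ → ℕ) (σ : SimpleGraph V₂) (ℓσ : V₂ → ℕ) :
    obsDisjG τ ℓτ σ ℓσ G ≤ obs (τ ⊕g σ) (univ.map Function.Embedding.inl ∪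
      univ.map Function.Embedding.inr) (Sum.elim ℓτ ℓσ) (toHost G) := by
  classical
  have : Finite (τ ↪g G) := DFunLike.finite _
  have : Fintype (τ ↪g G) := Fintype.ofFinite _
  have : Finite (σ ↪g G) := DFunLike.finite _
  have : Fintype (σ ↪g G) := Fintype.ofFinite _
  have hdisj : Disjoint (univ.map (Function.Embedding.inl : V₁ ↪ V₁ ⊕ V₂))
      (univ.map Function.Embedding.inr) := by
    rw [disjoint_left]; intro v hv hv'
    simp only [Finset.mem_map, mem_univ, true_and] at hv hv'
    obtain ⟨a, rfl⟩ := hv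
    obtain ⟨b, hb⟩ := hv'
    cases hb
  have hU : univ.map (Function.Embedding.inl : V₁ ↪ V₁ ⊕ V₂) ∪
      univ.map Function.Embedding.inr = univ := by
    ext v; cases v <;> simp
  let e : (τ ↪g G) × (σ ↪g G) → (V₁ ⊕ V₂ → ℕ) := fun q =>
    Sum.elim (fun a => ((q.1 a : Fin n) : ℕ)) fun b => ((q.2 b : Fin n) : ℕ)
  rw [obsDisjG, finsum_eq_sum_of_fintype]
  simp only [finsum_eq_sum_of_fintype]
  rw [obs, ← sum_filter, ← sum_product', univ_product_univ, ← sum_filter]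
  have hinj : Set.InjOn e (filter (fun q : (τ ↪g G) × (σ ↪g G) =>
      Disjoint (Set.range ⇑q.1) (Set.range ⇑q.2)) univ) := by
    rintro ⟨a, b⟩ _ ⟨a', b'⟩ _ h
    refine Prod.ext ?_ ?_
    · ext w; exact congrFun h (Sum.inl w)
    · ext w; exact congrFun h (Sum.inr w)
  have hw : ∀ q : (τ ↪g G) × (σ ↪g G), embWeight G ℓτ ⇑q.1 * embWeight G ℓσ ⇑q.2 =
      wprod (Sum.elim ℓτ ℓσ) (univ.map Function.Embedding.inl ∪
        univ.map Function.Embedding.inr) (toHost G).x (e q) := by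
    intro q
    rw [wprod, prod_union hdisj]
    exact (congrArg₂ _ (wprod_toHost G Function.Embedding.inl (Sum.elim ℓτ ℓσ) q.1 (e q)
      fun w => rfl) (wprod_toHost G Function.Embedding.inr (Sum.elim ℓτ ℓσ) q.2 (e q)
      fun w => rfl)).symm
  simp only [hw]
  rw [← sum_image (f := fun ψ => wprod (Sum.elim ℓτ ℓσ) _ (toHost G).x ψ) hinj]
  refine sum_le_sum_of_subset_of_nonneg ?_ fun _ _ _ => wprod_nonneg _ _ _ _
  intro ψ hψ
  obtain ⟨⟨a, b⟩, hq, rfl⟩ := mem_image.1 hψ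
  have hab : Disjoint (Set.range ⇑a) (Set.range ⇑b) := (mem_filter.1 hq).2
  rw [Set.disjoint_left] at hab
  rw [hU, mem_filter, mem_dom]
  refine ⟨⟨?_, fun v hv => absurd (mem_univ v) hv⟩, ?_, ?_⟩
  · rintro (v | v) _
    · exact (a v).2
    · exact (b v).2
  · rintro (v | v) _ (w | w) _ h
    · exact congrArg _ (a.injective (Fin.ext h))
    · have h' : a v = b w := Fin.ext h
      exact absurd ⟨w, h'.symm⟩ (hab ⟨v, rfl⟩)
    · have h' : b v = a w := Fin.ext h
      exact absurd ⟨v, h'⟩ (hab ⟨w, rfl⟩)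
    · exact congrArg _ (b.injective (Fin.ext h))
  · rintro (v | v) _ (w | w) _ h
    · exact (toHost_adj G _ _).2 (a.map_adj_iff.2 h)
    · exact absurd h (by simp)
    · exact absurd h (by simp)
    · exact (toHost_adj G _ _).2 (b.map_adj_iff.2 h)

lemma conn_map {V W : Type} [Fintype V] [DecidableEq V] [Fintype W] {τ : SimpleGraph W}
    (hτ : τ.Connected) {g : SimpleGraph V} (ι : τ ↪g g) : Conn g (univ.map ι.toEmbedding) := by
  have := hτ.nonempty
  refine ⟨univ_nonempty.map, fun B hB ⟨v, hv⟩ hne => ?_⟩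
  obtain ⟨x, hx, hxB⟩ : ∃ x ∈ univ.map ι.toEmbedding, x ∉ B := by
    by_contra! hcon
    exact hne (subset_antisymm hB hcon)
  obtain ⟨a, -, rfl⟩ := mem_map.1 (hB hv)
  obtain ⟨b, -, rfl⟩ := mem_map.1 hx
  obtain ⟨p⟩ := hτ.preconnected a b
  obtain ⟨d, -, hd1, hd2⟩ := p.exists_boundary_dart {w | ι w ∈ B} hv hxB
  exact ⟨ι d.fst, hd1, ι d.snd, mem_map_of_mem _ (mem_univ _), hd2, ι.map_adj_iff.2 d.adj⟩

end Link

/-- **Proposition 3.9.** For every `α > 0`, every seed of size `k ≥ 2` and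
all decorated trees `τ, σ`: `E[F_{τ,σ}(T_n)] = O(E[F_τ(T_n)]·E[F_σ(T_n)])`. -/
theorem disjoint_pair_first_moment_bound (α : ℝ) (hα : 0 < α) (k : ℕ) (hk : 2 ≤ k)
    (S : SimpleGraph (Fin k)) (hS : S.IsTree) (τ σ : DecTree)
    (hτ : τ.tree.IsTree) (hσ : σ.tree.IsTree) :
    (fun m => ∫ G, obsDisjG τ.tree τ.dec σ.tree σ.dec G ∂paLaw α S m) =O[atTop]
      fun m => (∫ G, τ.obs G ∂paLaw α S m) * ∫ G, σ.obs G ∂paLaw α S m := by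
  let g := τ.tree ⊕g σ.tree
  let iτ : τ.tree ↪g g := SimpleGraph.Embedding.sumInl
  let iσ : σ.tree ↪g g := SimpleGraph.Embedding.sumInr
  let A := Finset.univ.map iτ.toEmbedding
  let B := Finset.univ.map iσ.toEmbedding
  let ℓ : Fin τ.n ⊕ Fin σ.n → ℕ := Sum.elim τ.dec σ.dec
  have hAB : ∀ a ∈ A, ∀ b ∈ B, a ≠ b ∧ ¬ g.Adj a b := by
    intro a ha b hb
    obtain ⟨a, -, rfl⟩ := Finset.mem_map.1 ha
    obtain ⟨b, -, rfl⟩ := Finset.mem_map.1 hb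
    exact ⟨Sum.inl_ne_inr, SimpleGraph.not_adj_sum_inl_inr a b⟩
  obtain ⟨K, -, hK⟩ := (meanChain_paLaw hα hk hS).pair_bound hα hk g _ A B ℓ
    (Finset.disjoint_left.2 fun a ha hb => (hAB a ha a hb).1 rfl)
    (fun a ha b hb => (hAB a ha b hb).2) (conn_map hτ.connected iτ) (conn_map hσ.connected iσ) rfl
  refine IsBigO.of_bound K (Eventually.of_forall fun m => ?_)
  have hA : ∫ G, obs g A ℓ (toHost G) ∂paLaw α S m = ∫ G, τ.obs G ∂paLaw α S m := by
    refine integral_congr_ae ?_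
    filter_upwards [ae_isTree_paLaw α hS m] with G hG
    exact obs_toHost hG.isAcyclic hτ.connected iτ ℓ
  have hB : ∫ G, obs g B ℓ (toHost G) ∂paLaw α S m = ∫ G, σ.obs G ∂paLaw α S m := by
    refine integral_congr_ae ?_
    filter_upwards [ae_isTree_paLaw α hS m] with G hG
    exact obs_toHost hG.isAcyclic hσ.connected iσ ℓ
  have h0 : 0 ≤ ∫ G, obsDisjG τ.tree τ.dec σ.tree σ.dec G ∂paLaw α S m := by
    classical
    refine integral_nonneg fun G => finsum_nonneg fun φ₁ => finsum_nonneg fun φ₂ => ?_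
    have h : ∀ (T : DecTree) (φ : Fin T.n → Fin (k + m)), 0 ≤ embWeight G T.dec φ :=
      fun T φ => Finset.prod_nonneg fun _ _ => Nat.cast_nonneg _
    split_ifs
    · exact mul_nonneg (h τ _) (h σ _)
    · exact le_rfl
  have hle : ∫ G, obsDisjG τ.tree τ.dec σ.tree σ.dec G ∂paLaw α S m ≤
      ∫ G, obs g (A ∪ B) ℓ (toHost G) ∂paLaw α S m :=
    integral_mono Integrable.of_finite Integrable.of_finite fun G => obsDisjG_le G _ _ _ _
  have hmain := hK m
  simp only [hA, hB] at hmain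
  have hA0 : 0 ≤ ∫ G, τ.obs G ∂paLaw α S m := hA ▸ integral_nonneg fun G => obs_nonneg _ _ _ _
  have hB0 : 0 ≤ ∫ G, σ.obs G ∂paLaw α S m := hB ▸ integral_nonneg fun G => obs_nonneg _ _ _ _
  rw [Real.norm_of_nonneg h0, Real.norm_of_nonneg (mul_nonneg hA0 hB0)]
  exact hle.trans hmain

end AffinePA
end
end

section
/- Let τ = (τ, ℓ_τ) and σ = (σ, ℓ_σ) be decorated trees, let v be a loose leaf of τ and u its unique neighbour in τ, and set C = deg_τ(u) − ℓ_τ(u) − 2. Then for every finite tree T: F_{τ,σ}(T) + C·F_{τ∖v, σ}(T) ≤ F_{(τ∖v)^+, σ}(T) ≤ F_{τ,σ}(T) + (C+1)·F_{τ∖v, σ}(T). -/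
/-!
Write `ψ` for an embedding of `τ ∖ v` in `T` and `φ₂` for an embedding of `σ` with image disjoint
from that of `ψ`. Restricting to `τ ∖ v` fibres the embeddings `φ` of `τ` over the `ψ`, and
preserves weights because `v` has decoration `0`. Hence all three quantities `F_{τ,σ}(T)`,
`F_{τ∖v,σ}(T)` and `F_{(τ∖v)⁺,σ}(T)` are sums over disjoint pairs `(ψ, φ₂)` of
`w(ψ) w(φ₂)` times a multiplicity:

* for `F_{τ,σ}`, the number `c` of extensions of `ψ` to `τ` that still avoid `φ₂`;
* for `F_{τ∖v,σ}`, the number `1`;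
* for `F_{(τ∖v)⁺,σ}`, the factor `deg_T(ψ u) - 1 - ℓ(u)`, since `[n]_{l+1} = [n]_l (n - l)`.

An extension is determined by the image of `v`, a neighbour of `ψ u` outside both images. Exactly
`deg_τ(u) - 1` neighbours of `ψ u` lie in the image of `ψ`, and at most one lies in the image of
`φ₂`: a vertex outside the connected image of a graph in a tree has at most one neighbour there
(`eq_of_adj_hom`). So `c = deg_T(ψ u) - deg_τ(u) + 1 - k` with `k ∈ {0, 1}` (`card_extensions`),
the multiplicity for `(τ∖v)⁺` equals `c + C + k`, and the claim follows termwise from `0 ≤ k ≤ 1`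
and the nonnegativity of the weights. The same fact `eq_of_adj_hom` shows that every admissible
choice for the image of `v` does give an induced embedding.
-/


open MeasureTheory Filter Asymptotics

noncomputable section

namespace AffinePA

/-! ### Attaching a leaf to an embedding in an acyclic graph -/

/-- In an acyclic graph, a vertex outside the image of a preconnected graph has at most one
neighbour in this image. -/
theorem eq_of_adj_hom {V W : Type*} {H : SimpleGraph V} (hH : H.Preconnected)
    {T : SimpleGraph W} (hT : T.IsAcyclic) (f : H →g T) {w : W} (hw : w ∉ Set.range f)
    {a b : V} (ha : T.Adj w (f a)) (hb : T.Adj w (f b)) : f a = f b := by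
  obtain ⟨p⟩ := hH b a
  have hbr := SimpleGraph.isAcyclic_iff_forall_adj_isBridge.1 hT ha
  -- The bridge `w — f a` lies on the walk `w — f b` followed by the image of `p`.
  have hmem := SimpleGraph.isBridge_iff_forall_walk_mem_edges.1 hbr
    (SimpleGraph.Walk.cons hb (p.map f))
  rw [SimpleGraph.Walk.edges_cons, List.mem_cons] at hmem
  rcases hmem with h | h
  · rcases Sym2.eq_iff.1 h with h | h
    · exact h.2
    · exact (hb.ne h.1).elim
  · have hs := SimpleGraph.Walk.fst_mem_support_of_mem_edges _ h
    rw [SimpleGraph.Walk.support_map, List.mem_map] at hs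
    obtain ⟨x, -, hx⟩ := hs
    exact (hw ⟨x, hx⟩).elim

/-- The restriction to `τ ∖ v` of an embedding of `τ`. -/
def restr {V W : Type*} {τ : SimpleGraph V} {T : SimpleGraph W} (v : V) (φ : τ ↪g T) :
    τ.comap (Subtype.val : {x : V // x ≠ v} → V) ↪g T :=
  (SimpleGraph.Embedding.comap (Function.Embedding.subtype _) τ).trans φ

theorem restr_apply {V W : Type*} {τ : SimpleGraph V} {T : SimpleGraph W} (v : V) (φ : τ ↪g T)
    (x : {x : V // x ≠ v}) : restr v φ x = φ x := rfl

theorem eq_of_adj_leaf {V : Type*} {τ : SimpleGraph V} {v u : V} (hdeg : degR τ v = 1)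
    (hadj : τ.Adj v u) {x : V} (hx : τ.Adj v x) : x = u := by
  have := (Nat.card_eq_one_iff_unique.1 hdeg).1
  exact congrArg Subtype.val (Subsingleton.elim (⟨x, hx⟩ : {w // τ.Adj v w}) ⟨u, hadj⟩)

theorem preconnected_delete_leaf {V : Type*} {τ : SimpleGraph V} {v u : V}
    (hτ : τ.Preconnected) (hdeg : degR τ v = 1) (hadj : τ.Adj v u) :
    (τ.comap (Subtype.val : {x : V // x ≠ v} → V)).Preconnected := by
  refine hτ.induce_of_degree_eq_one (s := {x | x ≠ v}) fun x hx => ?_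
  obtain rfl : x = v := by simpa using hx
  intro a ha b hb
  rw [eq_of_adj_leaf hdeg hadj ha, eq_of_adj_leaf hdeg hadj hb]

/-- A neighbour `w` of `ψ u` outside the image of `ψ` yields an extension of `ψ` to `τ` sending
the leaf `v` to `w`. -/
theorem exists_extension {V W : Type*} {τ : SimpleGraph V} {v u : V}
    (hτ : τ.Preconnected) (hdeg : degR τ v = 1) (hadj : τ.Adj v u)
    {T : SimpleGraph W} (hT : T.IsAcyclic)
    (ψ : τ.comap (Subtype.val : {x : V // x ≠ v} → V) ↪g T) {w : W}
    (hw : T.Adj (ψ ⟨u, hadj.ne'⟩) w) (hwr : w ∉ Set.range ψ) :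
    ∃ φ : τ ↪g T, restr v φ = ψ ∧ φ v = w := by
  classical
  let f : V → W := fun x => if h : x = v then w else ψ ⟨x, h⟩
  have hfv : f v = w := by simp [f]
  have hf : ∀ (x : V) (h : x ≠ v), f x = ψ ⟨x, h⟩ := fun x h => by simp [f, h]
  have hne : ∀ (x : V) (h : x ≠ v), ψ ⟨x, h⟩ ≠ w := fun x h e => hwr ⟨_, e⟩
  have hinj : Function.Injective f := by
    intro x y hxy
    by_cases hx : x = v <;> by_cases hy : y = v
    · rw [hx, hy]
    · subst hx
      rw [hfv, hf y hy] at hxy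
      exact (hne y hy hxy.symm).elim
    · subst hy
      rw [hfv, hf x hx] at hxy
      exact (hne x hx hxy).elim
    · rw [hf x hx, hf y hy] at hxy
      simpa using ψ.injective hxy
  have key : ∀ (x : V), x ≠ v → (T.Adj w (f x) ↔ τ.Adj v x) := by
    intro x hx
    rw [hf x hx]
    constructor
    · intro h
      have := eq_of_adj_hom (preconnected_delete_leaf hτ hdeg hadj) hT ψ.toHom
        (w := w) hwr (a := ⟨x, hx⟩) (b := ⟨u, hadj.ne'⟩) h hw.symm
      have := ψ.injective this
      rw [Subtype.mk.injEq] at this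
      rwa [this]
    · intro h
      obtain rfl := eq_of_adj_leaf hdeg hadj h
      exact hw.symm
  refine ⟨⟨⟨f, hinj⟩, ?_⟩, ?_, hfv⟩
  · intro x y
    change T.Adj (f x) (f y) ↔ τ.Adj x y
    by_cases hx : x = v <;> by_cases hy : y = v
    · subst hx
      subst hy
      simp
    · subst hx
      rw [hfv]
      exact key y hy
    · subst hy
      rw [hfv, T.adj_comm, τ.adj_comm]
      exact key x hx
    · rw [hf x hx, hf y hy]
      exact ψ.map_adj_iff
  · ext x
    exact hf x x.2

theorem restr_range_subset {V W : Type*} {τ : SimpleGraph V} {T : SimpleGraph W} (v : V)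
    (φ : τ ↪g T) : Set.range (restr v φ) ⊆ Set.range φ := by
  rintro _ ⟨x, rfl⟩
  exact ⟨x, rfl⟩

/-! ### Counting the extensions of an embedding -/

/-- The number of extensions of `ψ` to an embedding of `τ` whose image avoids that of `φ₂`. -/
def extCount {V₁ V₂ W : Type*} {τ : SimpleGraph V₁} {σ : SimpleGraph V₂} {T : SimpleGraph W}
    {v : V₁} (ψ : τ.comap (Subtype.val : {x : V₁ // x ≠ v} → V₁) ↪g T) (φ₂ : σ ↪g T) : ℕ :=
  Nat.card {φ : τ ↪g T // restr v φ = ψ ∧ Disjoint (Set.range φ) (Set.range φ₂)}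

/-- The number `c` of extensions of `ψ` to `τ` avoiding the image of `φ₂` satisfies
`c + deg_τ(u) + k = deg_T(ψ u) + 1` for some `k ≤ 1`, namely the number of neighbours of `ψ u` in
the image of `φ₂`. -/
theorem card_extensions {V₁ V₂ W : Type*} [Fintype V₁] [Fintype W] {τ : SimpleGraph V₁} {v u : V₁}
    (hτ : τ.Preconnected) (hdeg : degR τ v = 1) (hadj : τ.Adj v u)
    {σ : SimpleGraph V₂} (hσ : σ.Preconnected)
    {T : SimpleGraph W} (hT : T.IsAcyclic) [Fintype (τ ↪g T)]
    (ψ : τ.comap (Subtype.val : {x : V₁ // x ≠ v} → V₁) ↪g T) (φ₂ : σ ↪g T)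
    (hd : Disjoint (Set.range ψ) (Set.range φ₂)) :
    ∃ k ≤ 1, extCount ψ φ₂ + degR τ u + k =
      degR T (ψ ⟨u, hadj.ne'⟩) + 1 := by
  classical
  set u' : {x : V₁ // x ≠ v} := ⟨u, hadj.ne'⟩
  set N : Finset W := Finset.univ.filter fun w => T.Adj (ψ u') w with hN
  have hmN : ∀ w, w ∈ N ↔ T.Adj (ψ u') w := fun w => by simp [hN]
  have hNcard : degR T (ψ u') = N.card := by
    rw [degR, Nat.card_eq_fintype_card, Fintype.card_subtype]
  have hA : (N.filter (· ∈ Set.range ψ)).card + 1 = degR τ u := by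
    have h1 : degR τ u = (Finset.univ.filter fun y => τ.Adj u y).card := by
      rw [degR, Nat.card_eq_fintype_card, Fintype.card_subtype]
    have hv : v ∈ Finset.univ.filter fun y => τ.Adj u y := by simpa using hadj.symm
    rw [h1, ← Finset.card_erase_add_one hv]
    congr 1
    symm
    refine Finset.card_bij (fun y hy => ψ ⟨y, (Finset.mem_erase.1 hy).1⟩) ?_ ?_ ?_
    · intro y hy
      have h2 : τ.Adj u y := by simpa using (Finset.mem_erase.1 hy).2
      rw [Finset.mem_filter, hmN]
      exact ⟨ψ.map_adj_iff.2 h2, ⟨_, rfl⟩⟩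
    · intro y hy z hz h
      simpa using ψ.injective h
    · intro w hw
      rw [Finset.mem_filter, hmN] at hw
      obtain ⟨hw, ⟨x, rfl⟩⟩ := hw
      have h2 : τ.Adj u x := ψ.map_adj_iff.1 hw
      exact ⟨x, by simpa using ⟨x.2, h2⟩, rfl⟩
  have hK : (N.filter (· ∈ Set.range φ₂)).card ≤ 1 := by
    rw [Finset.card_le_one]
    intro a ha b hb
    rw [Finset.mem_filter, hmN] at ha hb
    obtain ⟨ha, ⟨x, rfl⟩⟩ := ha
    obtain ⟨hb, ⟨y, rfl⟩⟩ := hb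
    exact eq_of_adj_hom hσ hT φ₂.toHom (w := ψ u')
      (fun h => Set.disjoint_left.1 hd ⟨_, rfl⟩ h) ha hb
  have hc : extCount ψ φ₂ =
      ((N.filter (· ∉ Set.range ψ)).filter (· ∉ Set.range φ₂)).card := by
    rw [extCount, Nat.card_eq_fintype_card, Fintype.card_subtype]
    refine Finset.card_bij (fun φ _ => φ v) ?_ ?_ ?_
    · intro φ hφ
      obtain ⟨rfl, hdis⟩ := (Finset.mem_filter.1 hφ).2
      rw [Finset.mem_filter, Finset.mem_filter, hmN]
      refine ⟨⟨φ.map_adj_iff.2 hadj.symm, ?_⟩, Set.disjoint_left.1 hdis ⟨v, rfl⟩⟩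
      rintro ⟨x, hx⟩
      exact x.2 (φ.injective hx)
    · intro φ hφ φ' hφ' h
      have h1 := (Finset.mem_filter.1 hφ).2.1
      have h2 := (Finset.mem_filter.1 hφ').2.1
      ext x
      by_cases hx : x = v
      · rw [hx]
        exact h
      · exact DFunLike.congr_fun (h1.trans h2.symm) (⟨x, hx⟩ : {x : V₁ // x ≠ v})
    · intro w hw
      rw [Finset.mem_filter, Finset.mem_filter, hmN] at hw
      obtain ⟨φ, hφ, hφv⟩ := exists_extension hτ hdeg hadj hT ψ hw.1.1 hw.1.2
      refine ⟨φ, ?_, hφv⟩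
      rw [Finset.mem_filter]
      refine ⟨Finset.mem_univ _, hφ, ?_⟩
      rw [Set.disjoint_left]
      rintro _ ⟨x, rfl⟩
      by_cases hx : x = v
      · rw [hx, hφv]
        exact hw.2
      · refine Set.disjoint_left.1 hd ⟨⟨x, hx⟩, ?_⟩
        rw [← hφ, restr_apply]
  -- By disjointness of the images, excluding the image of `ψ` first keeps all of `N ∩ range φ₂`.
  have hK' : (N.filter (· ∉ Set.range ψ)).filter (· ∈ Set.range φ₂) =
      N.filter (· ∈ Set.range φ₂) := by
    ext w
    simp only [Finset.mem_filter]
    exact ⟨fun h => ⟨h.1.1, h.2⟩, fun h => ⟨⟨h.1, Set.disjoint_right.1 hd h.2⟩, h.2⟩⟩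
  refine ⟨_, hK, ?_⟩
  have e1 := Finset.card_filter_add_card_filter_not (s := N) (· ∈ Set.range ψ)
  have e2 := Finset.card_filter_add_card_filter_not (s := N.filter (· ∉ Set.range ψ))
    (· ∈ Set.range φ₂)
  rw [hK'] at e2
  omega

/-! ### Weights of embeddings -/

theorem embWeight_nonneg {V W : Type*} [Fintype V] (T : SimpleGraph W) (ℓ : V → ℕ) (f : V → W) :
    0 ≤ embWeight T ℓ f :=
  Finset.prod_nonneg fun _ _ => Nat.cast_nonneg _

theorem embWeight_restr {V W : Type*} [Fintype V] [DecidableEq V] {τ : SimpleGraph V}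
    {T : SimpleGraph W} (ℓ : V → ℕ) {v : V} (hv : ℓ v = 0) (φ : τ ↪g T) :
    embWeight T (fun x : {x : V // x ≠ v} => ℓ x) (restr v φ) = embWeight T ℓ φ := by
  unfold embWeight
  rw [Fintype.prod_eq_mul_prod_subtype_ne _ v, hv]
  simp [restr_apply]

/-- Raising the decoration of `u` multiplies the weight by `deg_T(f u) - 1 - ℓ(u)`; no truncation
occurs, as `[n]_l` vanishes when `n < l`. -/
theorem embWeight_raise {V W : Type*} [Fintype V] [DecidableEq V] (T : SimpleGraph W)
    {ℓ ℓ' : V → ℕ} (u : V) (hu : ℓ' u = ℓ u + 1) (hne : ∀ x, x ≠ u → ℓ' x = ℓ x) (f : V → W)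
    (hpos : 1 ≤ degR T (f u)) :
    embWeight T ℓ' f = ((degR T (f u) : ℝ) - 1 - ℓ u) * embWeight T ℓ f := by
  unfold embWeight
  rw [← Finset.mul_prod_erase _ _ (Finset.mem_univ u),
    ← Finset.mul_prod_erase Finset.univ
      (fun x => ((degR T (f x) - 1).descFactorial (ℓ x) : ℝ)) (Finset.mem_univ u), ← mul_assoc]
  congr 1
  · rw [hu, Nat.descFactorial_succ, Nat.cast_mul]
    rcases le_or_gt (ℓ u) (degR T (f u) - 1) with h | h
    · rw [Nat.cast_sub h, Nat.cast_sub hpos, Nat.cast_one]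
    · rw [Nat.descFactorial_of_lt h]
      simp
  · refine Finset.prod_congr rfl fun x hx => ?_
    rw [hne x (Finset.ne_of_mem_erase hx)]

/-! ### Sums over disjoint pairs of embeddings -/

open Classical in
theorem obsDisjG_eq_sum {V₁ V₂ W : Type*} [Fintype V₁] [Fintype V₂] (τ : SimpleGraph V₁)
    (ℓτ : V₁ → ℕ) (σ : SimpleGraph V₂) (ℓσ : V₂ → ℕ) (T : SimpleGraph W)
    [Fintype (τ ↪g T)] [Fintype (σ ↪g T)] :
    obsDisjG τ ℓτ σ ℓσ T = ∑ φ₁ : τ ↪g T, ∑ φ₂ : σ ↪g T,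
      if Disjoint (Set.range φ₁) (Set.range φ₂) then
        embWeight T ℓτ φ₁ * embWeight T ℓσ φ₂ else 0 := by
  unfold obsDisjG
  simp only [finsum_eq_sum_of_fintype]

open Classical in
/-- `F_{τ,σ}(T)` as a sum over the embeddings of `τ ∖ v`, each disjoint pair being counted with the
number of its extensions. -/
theorem obsDisjG_eq_sum_restr {V₁ V₂ W : Type*} [Fintype V₁] [DecidableEq V₁] [Fintype V₂]
    (τ : SimpleGraph V₁) (ℓτ : V₁ → ℕ) (σ : SimpleGraph V₂) (ℓσ : V₂ → ℕ) (T : SimpleGraph W)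
    {v : V₁} (hv : ℓτ v = 0) [Fintype (τ ↪g T)] [Fintype (σ ↪g T)]
    [Fintype (τ.comap (Subtype.val : {x : V₁ // x ≠ v} → V₁) ↪g T)] :
    obsDisjG τ ℓτ σ ℓσ T =
      ∑ ψ : τ.comap (Subtype.val : {x : V₁ // x ≠ v} → V₁) ↪g T, ∑ φ₂ : σ ↪g T,
        if Disjoint (Set.range ψ) (Set.range φ₂) then
          (extCount ψ φ₂ : ℝ) *
          (embWeight T (fun x : {x : V₁ // x ≠ v} => ℓτ x) ψ * embWeight T ℓσ φ₂) else 0 := by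
  rw [obsDisjG_eq_sum, ← Finset.sum_fiberwise Finset.univ (restr v)]
  refine Finset.sum_congr rfl fun ψ _ => ?_
  rw [Finset.sum_comm]
  refine Finset.sum_congr rfl fun φ₂ _ => ?_
  rw [← Finset.sum_filter, Finset.filter_filter]
  split_ifs with hd
  · rw [extCount, Nat.card_eq_fintype_card, Fintype.card_subtype, ← nsmul_eq_mul]
    refine Finset.sum_eq_card_nsmul fun φ hφ => ?_
    obtain ⟨rfl, -⟩ := (Finset.mem_filter.1 hφ).2
    rw [← embWeight_restr ℓτ hv φ]
  · refine Finset.sum_eq_zero fun φ hφ => ?_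
    obtain ⟨rfl, h⟩ := (Finset.mem_filter.1 hφ).2
    exact (hd (h.mono_left (restr_range_subset v φ))).elim

theorem one_le_degR_s11 {W : Type*} [Finite W] {T : SimpleGraph W} (hT : T.Preconnected) {x y : W}
    (hxy : x ≠ y) : 1 ≤ degR T x := by
  have : Nontrivial W := ⟨x, y, hxy⟩
  obtain ⟨w, hw⟩ := hT.exists_adj_of_nontrivial x
  have : Nonempty {w // T.Adj x w} := ⟨⟨w, hw⟩⟩
  exact Nat.card_pos

/-! ### The loose leaf inequality -/

/-- **Lemma 3.12.** Let `τ, σ` be decorated trees, `v` a loose leaf of `τ`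
with unique neighbour `u`, and `C = deg_τ(u) - ℓ_τ(u) - 2`. Then for every finite tree `T`:
`F_{τ,σ}(T) + C·F_{τ∖v,σ}(T) ≤ F_{(τ∖v)⁺,σ}(T) ≤ F_{τ,σ}(T) + (C+1)·F_{τ∖v,σ}(T)`. -/
theorem loose_leaf_inequality {V₁ V₂ : Type*} [Fintype V₁] [DecidableEq V₁] [Fintype V₂]
    (τ : SimpleGraph V₁) (hτ : τ.IsTree) (ℓτ : V₁ → ℕ)
    (σ : SimpleGraph V₂) (hσ : σ.IsTree) (ℓσ : V₂ → ℕ)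
    (v u : V₁) (hleafdeg : degR τ v = 1) (hleafdec : ℓτ v = 0) (hadj : τ.Adj v u) :
    ∀ (W : Type) [Fintype W] (T : SimpleGraph W), T.IsTree →
      obsDisjG τ ℓτ σ ℓσ T +
          ((degR τ u : ℝ) - (ℓτ u : ℝ) - 2) *
            obsDisjG (τ.comap (Subtype.val : {x : V₁ // x ≠ v} → V₁))
              (fun x => ℓτ (x : V₁)) σ ℓσ T ≤
        obsDisjG (τ.comap (Subtype.val : {x : V₁ // x ≠ v} → V₁))
          (fun x => if (x : V₁) = u then ℓτ u + 1 else ℓτ (x : V₁)) σ ℓσ T ∧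
      obsDisjG (τ.comap (Subtype.val : {x : V₁ // x ≠ v} → V₁))
          (fun x => if (x : V₁) = u then ℓτ u + 1 else ℓτ (x : V₁)) σ ℓσ T ≤
        obsDisjG τ ℓτ σ ℓσ T +
          (((degR τ u : ℝ) - (ℓτ u : ℝ) - 2) + 1) *
            obsDisjG (τ.comap (Subtype.val : {x : V₁ // x ≠ v} → V₁))
              (fun x => ℓτ (x : V₁)) σ ℓσ T := by
  classical
  intro W _ T hT
  have : Fintype (τ ↪g T) := @Fintype.ofFinite _ (DFunLike.finite _)
  have : Fintype (σ ↪g T) := @Fintype.ofFinite _ (DFunLike.finite _)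
  have : Fintype (τ.comap (Subtype.val : {x : V₁ // x ≠ v} → V₁) ↪g T) :=
    @Fintype.ofFinite _ (DFunLike.finite _)
  obtain ⟨y₀⟩ := hσ.connected.nonempty
  have hu : u ≠ v := hadj.ne'
  rw [obsDisjG_eq_sum_restr τ ℓτ σ ℓσ T hleafdec, obsDisjG_eq_sum, obsDisjG_eq_sum]
  -- For one disjoint pair: the multiplicity of `(τ∖v)⁺` is `c + C + k` with `k ∈ {0, 1}`.
  have key : ∀ (ψ : τ.comap (Subtype.val : {x : V₁ // x ≠ v} → V₁) ↪g T) (φ₂ : σ ↪g T),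
      Disjoint (Set.range ψ) (Set.range φ₂) → ∃ k : ℝ, 0 ≤ k ∧ k ≤ 1 ∧
        embWeight T (fun x : {x : V₁ // x ≠ v} =>
            if (x : V₁) = u then ℓτ u + 1 else ℓτ (x : V₁)) ψ =
          ((extCount ψ φ₂ : ℝ) + ((degR τ u : ℝ) - (ℓτ u : ℝ) - 2) + k) *
          embWeight T (fun x : {x : V₁ // x ≠ v} => ℓτ x) ψ := by
    intro ψ φ₂ hd
    obtain ⟨k, hk, hcard⟩ := card_extensions hτ.connected.preconnected hleafdeg hadj
      hσ.connected.preconnected hT.isAcyclic ψ φ₂ hd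
    have hpos : 1 ≤ degR T (ψ ⟨u, hu⟩) :=
      one_le_degR_s11 hT.connected.preconnected (y := φ₂ y₀)
        fun e => Set.disjoint_left.1 hd ⟨_, rfl⟩ ⟨y₀, e.symm⟩
    refine ⟨k, Nat.cast_nonneg k, by exact_mod_cast hk, ?_⟩
    rw [embWeight_raise T (ℓ := fun x : {x : V₁ // x ≠ v} => ℓτ x) ⟨u, hu⟩ (by simp)
      (fun x hx => if_neg fun e => hx (Subtype.ext e)) ψ hpos]
    congr 1
    have hcard' := congrArg (Nat.cast : ℕ → ℝ) hcard
    push_cast at hcard' ⊢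
    linarith
  constructor
  · simp only [Finset.mul_sum, ← Finset.sum_add_distrib]
    refine Finset.sum_le_sum fun ψ _ => Finset.sum_le_sum fun φ₂ _ => ?_
    split_ifs with hd
    · obtain ⟨k, hk0, hk1, e⟩ := key ψ φ₂ hd
      rw [e]
      have := mul_nonneg hk0 (mul_nonneg
        (embWeight_nonneg T (fun x : {x : V₁ // x ≠ v} => ℓτ x) ψ) (embWeight_nonneg T ℓσ φ₂))
      linarith
    · simp
  · simp only [Finset.mul_sum, ← Finset.sum_add_distrib]
    refine Finset.sum_le_sum fun ψ _ => Finset.sum_le_sum fun φ₂ _ => ?_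
    split_ifs with hd
    · obtain ⟨k, hk0, hk1, e⟩ := key ψ φ₂ hd
      rw [e]
      have := mul_nonneg (sub_nonneg.2 hk1) (mul_nonneg
        (embWeight_nonneg T (fun x : {x : V₁ // x ≠ v} => ℓτ x) ψ) (embWeight_nonneg T ℓσ φ₂))
      linarith
    · simp

end AffinePA
end
end
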